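/- arXiv:1202.0472 — 6 statements merged into one kernel-verified Lean document; each statement's English description precedes it below -/
import Mathlib

section
/- Let E = ([−1,1]×{0}) ∪ ({0}×[0,1]) ⊂ ℝ². For every p ∈ (0,3) one has M_p^1(E) < ∞. -/
open MeasureTheory Metric Set Filter
open scoped ENNReal Topology Classical

noncomputable section

/-- The affine line through `x` and `y`. -/
def lineThrough {n : ℕ} (x y : EuclideanSpace ℝ (Fin n)) : Set (EuclideanSpace ℝ (Fin n)) :=
  {p | ∃ t : ℝ, p = x + t • (y - x)}

/-- The inverse circumradius `κ(x,y,z)` of a triple of points, set to `0` when the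
points are not pairwise distinct. -/
def kappa {n : ℕ} (x y z : EuclideanSpace ℝ (Fin n)) : ℝ≥0∞ :=
  if x ≠ y ∧ y ≠ z ∧ x ≠ z then
    ENNReal.ofReal (2 * Metric.infDist z (lineThrough x y) / (‖x - z‖ * ‖y - z‖))
  else 0

/-- `κ_G(x) = sup_{v,w ∈ X} κ(x,v,w)`. -/
def kappaG {n : ℕ} (X : Set (EuclideanSpace ℝ (Fin n))) (x : EuclideanSpace ℝ (Fin n)) : ℝ≥0∞ :=
  ⨆ v ∈ X, ⨆ w ∈ X, kappa x v w

/-- `κ_i(x,y) = sup_{z ∈ X} κ(x,y,z)`. -/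
def kappaI {n : ℕ} (X : Set (EuclideanSpace ℝ (Fin n))) (x y : EuclideanSpace ℝ (Fin n)) : ℝ≥0∞ :=
  ⨆ z ∈ X, kappa x y z

/-- The energy `U_p^α(X) = ∫_X κ_G(x)^p dH^α(x)`. -/
def energyU {n : ℕ} (p α : ℝ) (X : Set (EuclideanSpace ℝ (Fin n))) : ℝ≥0∞ :=
  ∫⁻ x in X, kappaG X x ^ p ∂ μH[α]

/-- The energy `I_p^α(X) = ∫_X ∫_X κ_i(x,y)^p dH^α(x) dH^α(y)`. -/
def energyI {n : ℕ} (p α : ℝ) (X : Set (EuclideanSpace ℝ (Fin n))) : ℝ≥0∞ :=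
  ∫⁻ y in X, ∫⁻ x in X, kappaI X x y ^ p ∂ μH[α] ∂ μH[α]

/-- The integral Menger curvature `M_p^α(X)`. -/
def energyM {n : ℕ} (p α : ℝ) (X : Set (EuclideanSpace ℝ (Fin n))) : ℝ≥0∞ :=
  ∫⁻ z in X, ∫⁻ y in X, ∫⁻ x in X, kappa x y z ^ p ∂ μH[α] ∂ μH[α] ∂ μH[α]

/-- The open double cone about `x` in direction `s` with opening angle `ε`. -/
def cone {n : ℕ} (s : EuclideanSpace ℝ (Fin n)) (ε : ℝ) (x : EuclideanSpace ℝ (Fin n)) :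
    Set (EuclideanSpace ℝ (Fin n)) :=
  {y | y ≠ x ∧
    min (InnerProductGeometry.angle (y - x) s) (InnerProductGeometry.angle (y - x) (-s)) < ε}

/-- `X` has an approximate `α`-tangent at `x`. -/
def HasApproxTangent {n : ℕ} (α : ℝ) (X : Set (EuclideanSpace ℝ (Fin n)))
    (x : EuclideanSpace ℝ (Fin n)) : Prop :=
  ∃ s : EuclideanSpace ℝ (Fin n), ‖s‖ = 1 ∧ ∀ ε > (0:ℝ),
    Filter.Tendsto
      (fun r : ℝ => μH[α] ((X \ cone s ε x) ∩ Metric.closedBall x r) / ENNReal.ofReal (2 * r) ^ α)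
      (𝓝[>] 0) (𝓝 0)

/-- `X` has a weak approximate `α`-tangent at `x`. -/
def HasWeakApproxTangent {n : ℕ} (α : ℝ) (X : Set (EuclideanSpace ℝ (Fin n)))
    (x : EuclideanSpace ℝ (Fin n)) : Prop :=
  ∃ ρ > (0:ℝ), ∃ s : ℝ → EuclideanSpace ℝ (Fin n), (∀ r ∈ Set.Ioo (0:ℝ) ρ, ‖s r‖ = 1) ∧
    ∀ ε > (0:ℝ),
      Filter.Tendsto
        (fun r : ℝ =>
          μH[α] ((X \ cone (s r) ε x) ∩ Metric.closedBall x r) / ENNReal.ofReal (2 * r) ^ α)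
        (𝓝[>] 0) (𝓝 0)

/-- Lower `α`-density of `X` at `x`. -/
def lowerDensity {n : ℕ} (α : ℝ) (X : Set (EuclideanSpace ℝ (Fin n)))
    (x : EuclideanSpace ℝ (Fin n)) : ℝ≥0∞ :=
  Filter.liminf
    (fun r : ℝ => μH[α] (X ∩ Metric.closedBall x r) / ENNReal.ofReal (2 * r) ^ α) (𝓝[>] 0)

/-- Upper `α`-density of `X` at `x`. -/
def upperDensity {n : ℕ} (α : ℝ) (X : Set (EuclideanSpace ℝ (Fin n)))
    (x : EuclideanSpace ℝ (Fin n)) : ℝ≥0∞ :=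
  Filter.limsup
    (fun r : ℝ => μH[α] (X ∩ Metric.closedBall x r) / ENNReal.ofReal (2 * r) ^ α) (𝓝[>] 0)


/-- The T-shaped set `E = ([-1,1] × {0}) ∪ ({0} × [0,1])` in `ℝ²`. -/
def Eset : Set (EuclideanSpace ℝ (Fin 2)) :=
  {p | p 1 = 0 ∧ p 0 ∈ Set.Icc (-1 : ℝ) 1} ∪ {p | p 0 = 0 ∧ p 1 ∈ Set.Icc (0 : ℝ) 1}

/-!
For any two of the three points, `κ` is at most `4` divided by their distance. Points on different
lines through the origin are at a distance comparable to their norms, and three points on the same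
line have `κ = 0`. Hence on a finite union of lines through the origin `κ(x,y,z)` is bounded by a
multiple of each of `‖x‖⁻¹`, `‖y‖⁻¹` and `‖z‖⁻¹`, so `κ(x,y,z)^p` is bounded by a multiple of
`(‖x‖ ‖y‖ ‖z‖)^(-p/3)`. The triple integral of this bound is a product of three one-dimensional
integrals, which converge near the origin because `p / 3 < 1`.
-/

open scoped NNReal

section Kappa

variable {n : ℕ} {x y z w a b : EuclideanSpace ℝ (Fin n)}

lemma left_mem_lineThrough (x y : EuclideanSpace ℝ (Fin n)) : x ∈ lineThrough x y :=
  ⟨0, by simp⟩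

lemma right_mem_lineThrough (x y : EuclideanSpace ℝ (Fin n)) : y ∈ lineThrough x y :=
  ⟨1, by simp⟩

lemma mem_lineThrough_of_finrank_eq_one {L : Submodule ℝ (EuclideanSpace ℝ (Fin n))}
    (hL : Module.finrank ℝ L = 1) (hx : x ∈ L) (hy : y ∈ L) (hz : z ∈ L) (hxy : x ≠ y) :
    z ∈ lineThrough x y := by
  have direction_ne_zero : (⟨y - x, L.sub_mem hy hx⟩ : L) ≠ 0 := by
    simpa [sub_eq_zero] using hxy.symm
  obtain ⟨t, ht⟩ :=
    exists_smul_eq_of_finrank_eq_one hL direction_ne_zero ⟨z - x, L.sub_mem hz hx⟩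
  have ht' : t • (y - x) = z - x := congrArg Subtype.val ht
  exact ⟨t, by rw [ht', add_sub_cancel]⟩

lemma kappa_eq_zero_of_not_distinct (h : ¬(x ≠ y ∧ y ≠ z ∧ x ≠ z)) : kappa x y z = 0 :=
  if_neg h

lemma kappa_mul_enorm_mul_enorm_le (hw : w ∈ lineThrough x y) :
    kappa x y z * (‖x - z‖ₑ * ‖y - z‖ₑ) ≤ 2 * ‖w - z‖ₑ := by
  by_cases h : x ≠ y ∧ y ≠ z ∧ x ≠ z
  · have hxz_pos : 0 < ‖x - z‖ := norm_sub_pos_iff.2 h.2.2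
    have hyz_pos : 0 < ‖y - z‖ := norm_sub_pos_iff.2 h.2.1
    have infDist_le : infDist z (lineThrough x y) ≤ ‖w - z‖ := by
      rw [← dist_eq_norm, dist_comm]
      exact infDist_le_dist_of_mem hw
    calc kappa x y z * (‖x - z‖ₑ * ‖y - z‖ₑ)
        = ENNReal.ofReal (2 * infDist z (lineThrough x y)) := by
          rw [kappa, if_pos h, ← ofReal_norm, ← ofReal_norm, ← ENNReal.ofReal_mul hxz_pos.le,
            ← ENNReal.ofReal_mul' (by positivity), div_mul_cancel₀ _ (by positivity)]
      _ ≤ ENNReal.ofReal (2 * ‖w - z‖) := by gcongr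
      _ = 2 * ‖w - z‖ₑ := by
          rw [ENNReal.ofReal_mul zero_le_two, ofReal_norm, ENNReal.ofReal_ofNat]
  · simp [kappa_eq_zero_of_not_distinct h]

lemma kappa_eq_zero_of_finrank_eq_one {L : Submodule ℝ (EuclideanSpace ℝ (Fin n))}
    (hL : Module.finrank ℝ L = 1) (hx : x ∈ L) (hy : y ∈ L) (hz : z ∈ L) : kappa x y z = 0 := by
  by_cases h : x ≠ y ∧ y ≠ z ∧ x ≠ z
  · obtain ⟨hxy, hyz, hxz⟩ := h
    have := kappa_mul_enorm_mul_enorm_le (z := z)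
      (mem_lineThrough_of_finrank_eq_one hL hx hy hz hxy)
    simpa [sub_eq_zero, hyz, hxz] using this
  · exact kappa_eq_zero_of_not_distinct h

lemma kappa_mul_enorm_left_sub_le (x y z : EuclideanSpace ℝ (Fin n)) :
    kappa x y z * ‖x - z‖ₑ ≤ 2 := by
  by_cases hyz : y = z
  · simp [kappa_eq_zero_of_not_distinct, hyz]
  have := kappa_mul_enorm_mul_enorm_le (z := z) (right_mem_lineThrough x y)
  rwa [← mul_assoc, ENNReal.mul_le_mul_iff_left (by simpa [sub_eq_zero]) enorm_ne_top] at this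

lemma kappa_mul_enorm_right_sub_le (x y z : EuclideanSpace ℝ (Fin n)) :
    kappa x y z * ‖y - z‖ₑ ≤ 2 := by
  by_cases hxz : x = z
  · simp [kappa_eq_zero_of_not_distinct, hxz]
  have := kappa_mul_enorm_mul_enorm_le (z := z) (left_mem_lineThrough x y)
  rwa [mul_left_comm, mul_comm, ENNReal.mul_le_mul_iff_left (by simpa [sub_eq_zero]) enorm_ne_top]
    at this

lemma kappa_mul_enorm_sub_le (ha : a ∈ ({x, y, z} : Set _)) (hb : b ∈ ({x, y, z} : Set _)) :
    kappa x y z * ‖a - b‖ₑ ≤ 4 := by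
  have hub : ∀ c ∈ ({x, y, z} : Set _), kappa x y z * ‖c - z‖ₑ ≤ 2 := by
    rintro c (rfl | rfl | rfl)
    · exact kappa_mul_enorm_left_sub_le c y z
    · exact kappa_mul_enorm_right_sub_le x c z
    · simp
  calc kappa x y z * ‖a - b‖ₑ
      ≤ kappa x y z * (‖a - z‖ₑ + ‖b - z‖ₑ) := by
        gcongr
        simpa using enorm_sub_le (a := a - z) (b := b - z)
    _ = kappa x y z * ‖a - z‖ₑ + kappa x y z * ‖b - z‖ₑ := mul_add ..
    _ ≤ 2 + 2 := add_le_add (hub a ha) (hub b hb)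
    _ = 4 := by norm_num

end Kappa

section Transversality

variable {ι 𝕜 E : Type*} [NontriviallyNormedField 𝕜] [NormedAddCommGroup E] [NormedSpace 𝕜 E]

/-- A family of subspaces is transversal with constant `C` if any point of one of them has norm at
most `C` times its distance to any point of a different one. Distinctness refers to the subspaces
and not to their indices, so that repetitions are allowed. -/
def TransversalWith (C : ℝ≥0) (L : ι → Submodule 𝕜 E) : Prop :=
  ∀ ⦃i j⦄, L i ≠ L j → ∀ x ∈ L i, ∀ y ∈ L j, ‖x‖ₑ ≤ C * ‖x - y‖ₑ

lemma exists_enorm_le_mul_enorm_sub_of_disjoint [CompleteSpace 𝕜] {U V : Submodule 𝕜 E}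
    [FiniteDimensional 𝕜 U] [FiniteDimensional 𝕜 V] (hUV : Disjoint U V) :
    ∃ C : ℝ≥0, ∀ x ∈ U, ∀ y ∈ V, ‖x‖ₑ ≤ C * ‖x - y‖ₑ := by
  have ker_eq_bot : (U.subtype.coprod V.subtype).ker = ⊥ := by
    rw [LinearMap.ker_coprod_of_disjoint_range _ _ (by simpa using hUV)]
    simp
  obtain ⟨C, -, hC⟩ := LinearMap.exists_antilipschitzWith _ ker_eq_bot
  refine ⟨C, fun x hx y hy ↦ ?_⟩
  calc ‖x‖ₑ ≤ edist ((⟨x, hx⟩, -⟨y, hy⟩) : U × V) 0 := by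
        rw [← edist_zero_right]
        exact le_max_left _ _
    _ ≤ C * ‖x - y‖ₑ := by simpa [sub_eq_add_neg] using hC (⟨x, hx⟩, -⟨y, hy⟩) 0

lemma exists_transversalWith [CompleteSpace 𝕜] [Finite ι] {L : ι → Submodule 𝕜 E}
    [∀ i, FiniteDimensional 𝕜 (L i)] (hL : ∀ i j, L i ≠ L j → Disjoint (L i) (L j)) :
    ∃ C, C ≠ 0 ∧ TransversalWith C L := by
  have exists_pair_const (ij : ι × ι) : ∃ C : ℝ≥0, L ij.1 ≠ L ij.2 →
      ∀ x ∈ L ij.1, ∀ y ∈ L ij.2, ‖x‖ₑ ≤ C * ‖x - y‖ₑ := by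
    by_cases hij : L ij.1 = L ij.2
    · exact ⟨0, fun h ↦ absurd hij h⟩
    · obtain ⟨C, hC⟩ := exists_enorm_le_mul_enorm_sub_of_disjoint (hL _ _ hij)
      exact ⟨C, fun _ ↦ hC⟩
  choose c hc using exists_pair_const
  obtain ⟨C, hC⟩ := Finite.exists_le c
  refine ⟨max C 1, by positivity, fun i j hij x hx y hy ↦ (hc (i, j) hij x hx y hy).trans ?_⟩
  gcongr
  exact (hC (i, j)).trans (le_max_left C 1)

lemma exists_transversalWith_of_finrank_eq_one [CompleteSpace 𝕜] [Finite ι]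
    {L : ι → Submodule 𝕜 E} (hL : ∀ i, Module.finrank 𝕜 (L i) = 1) :
    ∃ C, C ≠ 0 ∧ TransversalWith C L :=
  have (i : ι) : FiniteDimensional 𝕜 (L i) := .of_finrank_eq_succ (hL i)
  have isAtom (i : ι) : IsAtom (L i) := Submodule.isAtom_iff_finrank_eq_one.2 (hL i)
  exists_transversalWith fun i j ↦ (isAtom i).disjoint_of_ne (isAtom j)

end Transversality

section PointwiseBound

lemma ennreal_rpow_le_mul_rpow_neg_of_mul_le {a b M : ℝ≥0∞} {s : ℝ} (hM : M ≠ 0) (hM' : M ≠ ⊤)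
    (hs : 0 ≤ s) (h : a * b ≤ M) : a ^ s ≤ M ^ s * b ^ (-s) := by
  have : a ≤ M / b := (ENNReal.le_div_iff_mul_le (.inr hM) (.inr hM')).2 h
  calc a ^ s ≤ (M / b) ^ s := by gcongr
    _ = M ^ s * b ^ (-s) := by
        rw [ENNReal.div_rpow_of_nonneg _ _ hs, ENNReal.rpow_neg, div_eq_mul_inv]

variable {ι : Type*} {n : ℕ} {L : ι → Submodule ℝ (EuclideanSpace ℝ (Fin n))} {C : ℝ≥0}
  {x y z : EuclideanSpace ℝ (Fin n)}

lemma kappa_mul_enorm_le_of_transversalWith (hL : ∀ i, Module.finrank ℝ (L i) = 1)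
    (hC : TransversalWith C L) (hx : x ∈ ⋃ i, (L i : Set _)) (hy : y ∈ ⋃ i, (L i : Set _))
    (hz : z ∈ ⋃ i, (L i : Set _)) {w : EuclideanSpace ℝ (Fin n)}
    (hw : w ∈ ({x, y, z} : Set _)) : kappa x y z * ‖w‖ₑ ≤ 4 * C := by
  have vertex_mem_line : ∀ a ∈ ({x, y, z} : Set _), ∃ i, a ∈ L i := by
    rintro a (rfl | rfl | rfl)
    exacts [mem_iUnion.1 hx, mem_iUnion.1 hy, mem_iUnion.1 hz]
  obtain ⟨i, hwi⟩ := vertex_mem_line w hw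
  by_cases same_line : ∀ a ∈ ({x, y, z} : Set _), a ∈ L i
  · simp [kappa_eq_zero_of_finrank_eq_one (hL i) (same_line x (by simp)) (same_line y (by simp))
      (same_line z (by simp))]
  push Not at same_line
  obtain ⟨a, ha, hai⟩ := same_line
  obtain ⟨j, haj⟩ := vertex_mem_line a ha
  have hij : L i ≠ L j := fun h ↦ hai (h ▸ haj)
  calc kappa x y z * ‖w‖ₑ ≤ kappa x y z * (C * ‖w - a‖ₑ) := by
        gcongr
        exact hC hij w hwi a haj
    _ = kappa x y z * ‖w - a‖ₑ * C := by ring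
    _ ≤ 4 * C := by
        gcongr
        exact kappa_mul_enorm_sub_le hw ha

lemma kappa_rpow_le_of_transversalWith (hL : ∀ i, Module.finrank ℝ (L i) = 1)
    (hC₀ : C ≠ 0) (hC : TransversalWith C L) {p : ℝ} (hp : 0 ≤ p)
    (hx : x ∈ ⋃ i, (L i : Set _)) (hy : y ∈ ⋃ i, (L i : Set _)) (hz : z ∈ ⋃ i, (L i : Set _)) :
    kappa x y z ^ p ≤
      (4 * C) ^ p * (‖x‖ₑ ^ (-(p / 3)) * ‖y‖ₑ ^ (-(p / 3)) * ‖z‖ₑ ^ (-(p / 3))) := by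
  have rpow_eq_cube (t : ℝ≥0∞) : t ^ p = (t ^ (p / 3)) ^ 3 := by
    rw [← ENNReal.rpow_mul_natCast]
    norm_num
  have bound : ∀ w ∈ ({x, y, z} : Set _),
      kappa x y z ^ (p / 3) ≤ (4 * C) ^ (p / 3) * ‖w‖ₑ ^ (-(p / 3)) := fun w hw ↦
    ennreal_rpow_le_mul_rpow_neg_of_mul_le (by simpa) (by finiteness) (by positivity)
      (kappa_mul_enorm_le_of_transversalWith hL hC hx hy hz hw)
  calc kappa x y z ^ p
      = kappa x y z ^ (p / 3) * kappa x y z ^ (p / 3) * kappa x y z ^ (p / 3) := by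
        rw [rpow_eq_cube]
        ring
    _ ≤ (4 * C) ^ (p / 3) * ‖x‖ₑ ^ (-(p / 3)) * ((4 * C) ^ (p / 3) * ‖y‖ₑ ^ (-(p / 3))) *
        ((4 * C) ^ (p / 3) * ‖z‖ₑ ^ (-(p / 3))) := by
        gcongr <;> exact bound _ (by simp)
    _ = (4 * C) ^ p * (‖x‖ₑ ^ (-(p / 3)) * ‖y‖ₑ ^ (-(p / 3)) * ‖z‖ₑ ^ (-(p / 3))) := by
        rw [rpow_eq_cube (4 * C)]
        ring

end PointwiseBound

lemma energyM_le_mul_lintegral_pow_three {n : ℕ} {p α : ℝ} {X : Set (EuclideanSpace ℝ (Fin n))}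
    {c : ℝ≥0∞} {f : EuclideanSpace ℝ (Fin n) → ℝ≥0∞} (hf : Measurable f)
    (h : ∀ x ∈ X, ∀ y ∈ X, ∀ z ∈ X, kappa x y z ^ p ≤ c * (f x * f y * f z)) :
    energyM p α X ≤ c * (∫⁻ x in X, f x ∂μH[α]) ^ 3 := by
  set I := ∫⁻ x in X, f x ∂μH[α]
  have inner_le : ∀ z ∈ X, ∀ y ∈ X, ∫⁻ x in X, kappa x y z ^ p ∂μH[α] ≤ c * I * f z * f y := by
    intro z hz y hy
    calc ∫⁻ x in X, kappa x y z ^ p ∂μH[α] ≤ ∫⁻ x in X, c * f z * f y * f x ∂μH[α] :=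
          setLIntegral_mono (by fun_prop) fun x hx ↦ (h x hx y hy z hz).trans_eq (by ring)
      _ = c * I * f z * f y := by
          rw [lintegral_const_mul _ hf]
          ring
  have middle_le : ∀ z ∈ X, ∫⁻ y in X, ∫⁻ x in X, kappa x y z ^ p ∂μH[α] ∂μH[α] ≤
      c * I ^ 2 * f z := by
    intro z hz
    calc ∫⁻ y in X, ∫⁻ x in X, kappa x y z ^ p ∂μH[α] ∂μH[α]
        ≤ ∫⁻ y in X, c * I * f z * f y ∂μH[α] :=
          setLIntegral_mono (by fun_prop) (inner_le z hz)
      _ = c * I ^ 2 * f z := by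
          rw [lintegral_const_mul _ hf]
          ring
  calc energyM p α X ≤ ∫⁻ z in X, c * I ^ 2 * f z ∂μH[α] :=
        setLIntegral_mono (by fun_prop) middle_le
    _ = c * I ^ 3 := by
        rw [lintegral_const_mul _ hf]
        ring

section Integrability

variable {E : Type*} [NormedAddCommGroup E] [NormedSpace ℝ E] [MeasurableSpace E] [BorelSpace E]
  {q R : ℝ}

lemma setLIntegral_image_hausdorffMeasure_of_isometry {X Y : Type*} [EMetricSpace X]
    [CompleteSpace X] [MeasurableSpace X] [BorelSpace X] [EMetricSpace Y] [MeasurableSpace Y]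
    [BorelSpace Y] {g : X → Y} (hg : Isometry g) {d : ℝ} (hd : 0 ≤ d) (f : Y → ℝ≥0∞)
    (s : Set X) : ∫⁻ y in g '' s, f y ∂μH[d] = ∫⁻ x in s, f (g x) ∂μH[d] := by
  have measurePreserving : MeasurePreserving g μH[d] (μH[d].restrict (range g)) :=
    ⟨hg.continuous.measurable, hg.map_hausdorffMeasure (.inl hd)⟩
  rw [measurePreserving.setLIntegral_comp_emb hg.isClosedEmbedding.measurableEmbedding,
    Measure.restrict_restrict_of_subset (image_subset_range g s)]

lemma setLIntegral_ball_enorm_rpow_neg_lt_top [FiniteDimensional ℝ E] [Nontrivial E]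
    (μ : Measure E) [μ.IsAddHaarMeasure] (hq : q < Module.finrank ℝ E) :
    ∫⁻ x in ball 0 R, ‖x‖ₑ ^ (-q) ∂μ < ⊤ := by
  have integrableOn : IntegrableOn (fun x : E ↦ ‖x‖ ^ (-q)) (ball 0 R) μ :=
    integrableOn_ball_of_norm_le_rpow (C := 1) Module.finrank_pos hq
      (.of_forall fun x ↦ by simp [abs_of_nonneg, Real.rpow_nonneg])
      (by fun_prop : Measurable _).aestronglyMeasurable
  refine (lintegral_congr_ae (ae_restrict_of_ae ?_)).trans_lt integrableOn.2
  filter_upwards [compl_mem_ae_iff.2 (measure_singleton (0 : E))] with x hx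
  have hx_pos : 0 < ‖x‖ := norm_pos_iff.2 hx
  rw [Real.enorm_of_nonneg (by positivity), ← ofReal_norm, ENNReal.ofReal_rpow_of_pos hx_pos]

lemma setLIntegral_submodule_inter_ball_enorm_rpow_neg_lt_top (L : Submodule ℝ E)
    [FiniteDimensional ℝ L] [Nontrivial L] (hq : q < Module.finrank ℝ L) :
    ∫⁻ x in (L : Set E) ∩ ball 0 R, ‖x‖ₑ ^ (-q) ∂μH[Module.finrank ℝ L] < ⊤ := by
  have image_ball : L.subtypeₗᵢ '' ball 0 R = (L : Set E) ∩ ball 0 R := by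
    ext x
    simp [and_comm]
  rw [← image_ball, setLIntegral_image_hausdorffMeasure_of_isometry L.subtypeₗᵢ.isometry
    (Nat.cast_nonneg _)]
  exact setLIntegral_ball_enorm_rpow_neg_lt_top _ hq

lemma setLIntegral_enorm_rpow_neg_lt_top_of_subset_iUnion {ι : Type*} [Finite ι]
    {L : ι → Submodule ℝ E} {d : ℕ} (hd : 0 < d) (hL : ∀ i, Module.finrank ℝ (L i) = d)
    {X : Set E} (hX : X ⊆ ⋃ i, L i) (hXb : Bornology.IsBounded X) (hq : q < d) :
    ∫⁻ x in X, ‖x‖ₑ ^ (-q) ∂μH[d] < ⊤ := by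
  cases nonempty_fintype ι
  obtain ⟨R, hR⟩ := hXb.subset_ball 0
  have subset_pieces : X ⊆ ⋃ i, (L i ∩ ball 0 R : Set E) := by
    rw [← iUnion_inter]
    exact subset_inter hX hR
  have piece_lt_top (i : ι) : ∫⁻ x in (L i : Set E) ∩ ball 0 R, ‖x‖ₑ ^ (-q) ∂μH[d] < ⊤ := by
    have finrank_pos : 0 < Module.finrank ℝ (L i) := hL i ▸ hd
    have : FiniteDimensional ℝ (L i) := .of_finrank_pos finrank_pos
    have : Nontrivial (L i) := Module.nontrivial_of_finrank_pos finrank_pos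
    rw [← hL i] at hq ⊢
    exact setLIntegral_submodule_inter_ball_enorm_rpow_neg_lt_top (L i) hq
  calc ∫⁻ x in X, ‖x‖ₑ ^ (-q) ∂μH[d]
      ≤ ∫⁻ x in ⋃ i, (L i ∩ ball 0 R : Set E), ‖x‖ₑ ^ (-q) ∂μH[d] :=
        lintegral_mono_set subset_pieces
    _ ≤ ∑ i, ∫⁻ x in (L i : Set E) ∩ ball 0 R, ‖x‖ₑ ^ (-q) ∂μH[d] := by
        simpa only [tsum_fintype] using
          lintegral_iUnion_le (fun i ↦ (L i ∩ ball 0 R : Set E)) _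
    _ < ⊤ := ENNReal.sum_lt_top.2 fun i _ ↦ piece_lt_top i

end Integrability

theorem Eset_energyM_lt_top_all_general {n : ℕ} {ι : Type*} [Finite ι]
    {L : ι → Submodule ℝ (EuclideanSpace ℝ (Fin n))} (hL : ∀ i, Module.finrank ℝ (L i) = 1)
    {X : Set (EuclideanSpace ℝ (Fin n))} (hX : X ⊆ ⋃ i, L i) (hXb : Bornology.IsBounded X)
    {p : ℝ} (hp : 0 ≤ p) (hp3 : p < 3) : energyM p 1 X < ⊤ := by
  obtain ⟨C, hC₀, hC⟩ := exists_transversalWith_of_finrank_eq_one hL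
  have lintegral_lt_top : ∫⁻ x in X, ‖x‖ₑ ^ (-(p / 3)) ∂μH[1] < ⊤ := by
    have hp' : p / 3 < (1 : ℕ) := by
      push_cast
      linarith
    simpa only [Nat.cast_one] using
      setLIntegral_enorm_rpow_neg_lt_top_of_subset_iUnion one_pos hL hX hXb hp'
  calc energyM p 1 X
      ≤ (4 * C) ^ p * (∫⁻ x in X, ‖x‖ₑ ^ (-(p / 3)) ∂μH[1]) ^ 3 :=
        energyM_le_mul_lintegral_pow_three (by fun_prop) fun x hx y hy z hz ↦
          kappa_rpow_le_of_transversalWith hL hC₀ hC hp (hX hx) (hX hy) (hX hz)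
    _ < ⊤ := ENNReal.mul_lt_top (by finiteness) (ENNReal.pow_lt_top lintegral_lt_top)

section Eset

lemma finrank_span_single_eq_one {n : ℕ} (i : Fin n) :
    Module.finrank ℝ (Submodule.span ℝ {EuclideanSpace.single i (1 : ℝ)}) = 1 :=
  finrank_span_singleton (by simp)

lemma Eset_subset_iUnion_span_single :
    Eset ⊆ ⋃ i : Fin 2, Submodule.span ℝ {EuclideanSpace.single i (1 : ℝ)} := by
  rintro x (⟨hx1, -⟩ | ⟨hx0, -⟩)
  · refine mem_iUnion.2 ⟨0, Submodule.mem_span_singleton.2 ⟨x 0, ?_⟩⟩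
    ext i
    fin_cases i <;> simp [hx1]
  · refine mem_iUnion.2 ⟨1, Submodule.mem_span_singleton.2 ⟨x 1, ?_⟩⟩
    ext i
    fin_cases i <;> simp [hx0]

lemma isBounded_Eset : Bornology.IsBounded Eset := by
  refine isBounded_iff_forall_norm_le.2 ⟨1, ?_⟩
  rintro x (⟨hx1, hx0⟩ | ⟨hx0, hx1⟩)
  · simpa [EuclideanSpace.norm_eq, hx1, Real.sqrt_sq_eq_abs] using abs_le.2 hx0
  · simpa [EuclideanSpace.norm_eq, hx0, Real.sqrt_sq_eq_abs, abs_of_nonneg hx1.1] using hx1.2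

end Eset

theorem Eset_energyM_lt_top_all (p : ℝ) (hp : p ∈ Set.Ioo (0 : ℝ) 3) :
    energyM p 1 Eset < ⊤ :=
  Eset_energyM_lt_top_all_general finrank_span_single_eq_one Eset_subset_iUnion_span_single
    isBounded_Eset hp.1.le hp.2

end
end

section
/- Let a_n = 2^{−nⁿ·n³} and F = (⋃_{n∈ℕ} [a_{2n}/2, a_{2n}]×{0}) ∪ (⋃_{n∈ℕ} {0}×[a_{2n−1}/2, a_{2n−1}]) ⊂ ℝ². Then F has a weak approximate 1-tangent at the origin, but F has no approximate 1-tangent at the origin. -/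
open MeasureTheory Metric Set Filter
open scoped ENNReal Topology Classical

noncomputable section

/-- `a_n = 2 ^ (-(n^n * n^3))`. -/
def aseq (n : ℕ) : ℝ := ((2 : ℝ) ^ (n ^ n * n ^ 3))⁻¹

/-- The set `F = (⋃_{n ≥ 1} [a_{2n}/2, a_{2n}] × {0}) ∪ (⋃_{n ≥ 1} {0} × [a_{2n-1}/2, a_{2n-1}])`. -/
def Fset : Set (EuclideanSpace ℝ (Fin 2)) :=
  {p | ∃ n : ℕ, 1 ≤ n ∧ p 1 = 0 ∧ p 0 ∈ Set.Icc (aseq (2 * n) / 2) (aseq (2 * n))} ∪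
  {p | ∃ n : ℕ, 1 ≤ n ∧ p 0 = 0 ∧ p 1 ∈ Set.Icc (aseq (2 * n - 1) / 2) (aseq (2 * n - 1))}

/-!
At a small scale `r`, let `n` be the first index for which the segment of length `a n / 2` meets the
ball of radius `r`. Then `a n ≤ 2 * r`, and the segments after the `n`-th have total length at most
`a (n + 1)`, which is negligible against `a n`; so up to a negligible part the set lies on the line
of its `n`-th segment, and that line serves as the weak tangent at scale `r`. On the other hand, a
whole segment on a given axis fills a quarter of `2 * r` at the scale `r = a n`, so a tangent
independent of the scale would have to be the line of every direction that occurs infinitely often;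
here both axes do.
-/

section LineAngle

open InnerProductGeometry

variable {V : Type*} [NormedAddCommGroup V] [InnerProductSpace ℝ V] {v s : V}

/-- The angle between a vector `v` and the unoriented line spanned by `s`. The open double cone
`cone s ε 0` consists of the nonzero vectors for which it is less than `ε`. -/
def lineAngle (v s : V) : ℝ :=
  min (angle v s) (angle v (-s))

lemma lineAngle_self (hv : v ≠ 0) : lineAngle v v = 0 := by
  rw [lineAngle, angle_self hv, min_eq_left (angle_nonneg _ _)]

lemma lineAngle_smul_left {t : ℝ} (ht : 0 < t) (v s : V) :
    lineAngle (t • v) s = lineAngle v s := by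
  simp only [lineAngle, angle_smul_left_of_pos _ _ ht]

lemma mem_span_singleton_of_angle_nonpos (h : angle v s ≤ 0) : s ∈ Submodule.span ℝ {v} := by
  obtain ⟨-, c, -, hc⟩ := angle_eq_zero_iff.1 (h.antisymm (angle_nonneg v s))
  exact Submodule.mem_span_singleton.2 ⟨c, hc.symm⟩

lemma lineAngle_pos_of_notMem_span (hs : s ∉ Submodule.span ℝ {v}) : 0 < lineAngle v s := by
  refine lt_min ?_ ?_ <;> contrapose! hs
  · exact mem_span_singleton_of_angle_nonpos hs
  · exact neg_mem_iff.1 (mem_span_singleton_of_angle_nonpos hs)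

end LineAngle

lemma mem_cone_zero_iff {d : ℕ} {s y : EuclideanSpace ℝ (Fin d)} {ε : ℝ} :
    y ∈ cone s ε 0 ↔ y ≠ 0 ∧ lineAngle y s < ε := by
  simp only [cone, lineAngle, sub_zero, mem_ofPred_eq]

section RadialSegment

variable {V : Type*} [NormedAddCommGroup V] [NormedSpace ℝ V] {v : V} {ρ : ℝ}

/-- The outer half of the segment from the origin to `ρ • v`. The set `F` of the theorem is a union
of such segments. -/
def radialSegment (v : V) (ρ : ℝ) : Set V :=
  (fun t : ℝ => t • v) '' Icc (ρ / 2) ρ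

lemma hausdorffMeasure_radialSegment [MeasurableSpace V] [BorelSpace V] (hv : ‖v‖ = 1) (ρ : ℝ) :
    μH[1] (radialSegment v ρ) = ENNReal.ofReal (ρ / 2) := by
  have hv' : ‖v‖₊ = 1 := NNReal.eq hv
  rw [radialSegment, hausdorffMeasure_smul_right_image, hausdorffMeasure_real, Real.volume_Icc,
    hv', one_smul, sub_half]

lemma radialSegment_subset_closedBall (hv : ‖v‖ = 1) (hρ : 0 ≤ ρ) :
    radialSegment v ρ ⊆ closedBall 0 ρ := by
  rintro _ ⟨t, ht, rfl⟩
  have ht₀ : 0 ≤ t := by linarith [ht.1]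
  simpa [norm_smul, hv, abs_of_nonneg ht₀] using ht.2

lemma half_le_of_radialSegment_inter_closedBall_nonempty {r : ℝ} (hv : ‖v‖ = 1)
    (h : (radialSegment v ρ ∩ closedBall 0 r).Nonempty) : ρ / 2 ≤ r := by
  obtain ⟨_, ⟨t, ht, rfl⟩, htr⟩ := h
  have htr' : |t| ≤ r := by simpa [norm_smul, hv] using htr
  exact ht.1.trans ((le_abs_self t).trans htr')

lemma mem_radialSegment_single_iff {ι : Type*} [Fintype ι] [DecidableEq ι] {i : ι}
    {p : EuclideanSpace ℝ ι} :
    p ∈ radialSegment (EuclideanSpace.single i 1) ρ ↔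
      (∀ j, j ≠ i → p j = 0) ∧ p i ∈ Icc (ρ / 2) ρ := by
  constructor
  · rintro ⟨t, ht, rfl⟩
    exact ⟨fun j hj => by simp [hj], by simpa using ht⟩
  · rintro ⟨hzero, hi⟩
    refine ⟨p i, hi, ?_⟩
    ext j
    by_cases hj : j = i
    · simp [hj]
    · simp [hj, hzero j hj]

end RadialSegment

section Cone

variable {d : ℕ} {v s : EuclideanSpace ℝ (Fin d)} {ε ρ : ℝ}

lemma radialSegment_subset_cone_self (hv : v ≠ 0) (hρ : 0 < ρ) (hε : 0 < ε) :
    radialSegment v ρ ⊆ cone v ε 0 := by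
  rintro _ ⟨t, ht, rfl⟩
  have ht₀ : 0 < t := (half_pos hρ).trans_le ht.1
  rw [mem_cone_zero_iff, lineAngle_smul_left ht₀, lineAngle_self hv]
  exact ⟨smul_ne_zero ht₀.ne' hv, hε⟩

lemma disjoint_radialSegment_cone_lineAngle (hρ : 0 < ρ) :
    Disjoint (radialSegment v ρ) (cone s (lineAngle v s) 0) := by
  rw [disjoint_left]
  rintro _ ⟨t, ht, rfl⟩ hcone
  have hlt := (mem_cone_zero_iff.1 hcone).2
  rw [lineAngle_smul_left ((half_pos hρ).trans_le ht.1)] at hlt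
  exact hlt.false

/-- The normalized `α`-dimensional mass in the ball of radius `r` about `x` of the part of `X`
outside the double cone about `x`. An approximate tangent is a direction along which it vanishes as
`r → 0⁺` for every opening angle. -/
def densityOffCone (α : ℝ) (X : Set (EuclideanSpace ℝ (Fin d))) (x s : EuclideanSpace ℝ (Fin d))
    (ε r : ℝ) : ℝ≥0∞ :=
  μH[α] ((X \ cone s ε x) ∩ closedBall x r) / ENNReal.ofReal (2 * r) ^ α

lemma ofReal_quarter_le_densityOffCone {X : Set (EuclideanSpace ℝ (Fin d))} (hv : ‖v‖ = 1)
    (hρ : 0 < ρ) (hX : radialSegment v ρ ⊆ X) :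
    ENNReal.ofReal (1 / 4) ≤ densityOffCone 1 X 0 s (lineAngle v s) ρ := by
  have hsub : radialSegment v ρ ⊆ (X \ cone s (lineAngle v s) 0) ∩ closedBall 0 ρ :=
    subset_inter (subset_sdiff.2 ⟨hX, disjoint_radialSegment_cone_lineAngle hρ⟩)
      (radialSegment_subset_closedBall hv hρ.le)
  calc ENNReal.ofReal (1 / 4)
      = ENNReal.ofReal (ρ / 2) / ENNReal.ofReal (2 * ρ) := by
        rw [← ENNReal.ofReal_div_of_pos (by positivity)]
        congr 1
        field_simp
        norm_num
    _ ≤ densityOffCone 1 X 0 s (lineAngle v s) ρ := by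
        rw [densityOffCone, ENNReal.rpow_one, ← hausdorffMeasure_radialSegment hv]
        gcongr

end Cone

lemma disjoint_span_singleton_of_inner_eq_zero {V : Type*} [NormedAddCommGroup V]
    [InnerProductSpace ℝ V] {v w : V} (h : inner ℝ v w = 0) :
    Disjoint (Submodule.span ℝ {v}) (Submodule.span ℝ {w}) :=
  Submodule.IsOrtho.disjoint <| Submodule.isOrtho_span.2 <| by
    rintro _ rfl _ rfl
    exact h

section NoTangent

variable {d : ℕ} {X : Set (EuclideanSpace ℝ (Fin d))} {v w s : EuclideanSpace ℝ (Fin d)}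

lemma mem_span_singleton_of_tendsto_densityOffCone (hv : ‖v‖ = 1)
    (hX : ∃ᶠ ρ in 𝓝[>] (0 : ℝ), radialSegment v ρ ⊆ X)
    (hs : ∀ ε > 0, Tendsto (densityOffCone 1 X 0 s ε) (𝓝[>] 0) (𝓝 0)) :
    s ∈ Submodule.span ℝ {v} := by
  by_contra hspan
  have hsmall : ∀ᶠ ρ in 𝓝[>] (0 : ℝ),
      densityOffCone 1 X 0 s (lineAngle v s) ρ < ENNReal.ofReal (1 / 4) :=
    (hs _ (lineAngle_pos_of_notMem_span hspan)).eventually_lt_const (by simp)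
  obtain ⟨ρ, hρX, hlt, hρ⟩ := (hX.and_eventually (hsmall.and self_mem_nhdsWithin)).exists
  exact hlt.not_ge (ofReal_quarter_le_densityOffCone hv hρ hρX)

theorem not_hasApproxTangent_of_frequently_radialSegment_subset (hv : ‖v‖ = 1) (hw : ‖w‖ = 1)
    (hvw : Disjoint (Submodule.span ℝ {v}) (Submodule.span ℝ {w}))
    (hXv : ∃ᶠ ρ in 𝓝[>] (0 : ℝ), radialSegment v ρ ⊆ X)
    (hXw : ∃ᶠ ρ in 𝓝[>] (0 : ℝ), radialSegment w ρ ⊆ X) :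
    ¬ HasApproxTangent 1 X 0 := by
  rintro ⟨s, hs, htangent⟩
  have hs₀ : s = 0 := Submodule.disjoint_def.1 hvw s
    (mem_span_singleton_of_tendsto_densityOffCone hv hXv htangent)
    (mem_span_singleton_of_tendsto_densityOffCone hw hXw htangent)
  simp [hs₀] at hs

end NoTangent

section RapidDecay

variable {a : ℕ → ℝ}

lemma tendsto_zero_of_tendsto_ratio (ha : ∀ n, 0 < a n)
    (hratio : Tendsto (fun n => a (n + 1) / a n) atTop (𝓝 0)) : Tendsto a atTop (𝓝 0) := by
  refine (summable_of_ratio_test_tendsto_lt_one zero_lt_one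
    (Eventually.of_forall fun n => (ha n).ne') ?_).tendsto_atTop_zero
  simpa only [Real.norm_of_nonneg (ha _).le] using hratio

lemma tsum_ofReal_half_le (ha₀ : 0 ≤ a 0) (ha : ∀ n, a (n + 1) ≤ 1 / 2 * a n) :
    ∑' n, ENNReal.ofReal (a n / 2) ≤ ENNReal.ofReal (a 0) := by
  have hgeom (n : ℕ) : a n / 2 ≤ a 0 / 2 / 2 ^ n := by
    calc a n / 2 ≤ (1 / 2) ^ n * a 0 / 2 := by
          gcongr
          exact le_geom (by norm_num) n fun k _ => ha k
      _ = a 0 / 2 / 2 ^ n := by rw [one_div_pow]; ring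
  calc ∑' n, ENNReal.ofReal (a n / 2) ≤ ∑' n, ENNReal.ofReal (a 0 / 2 / 2 ^ n) :=
        ENNReal.tsum_le_tsum fun n => ENNReal.ofReal_le_ofReal (hgeom n)
    _ = ENNReal.ofReal (a 0) := by
        rw [← ENNReal.ofReal_tsum_of_nonneg (fun n => by positivity) (summable_geometric_two' _),
          tsum_geometric_two']

lemma eventually_tsum_tail_ofReal_half_le (ha : ∀ n, 0 < a n)
    (hratio : Tendsto (fun n => a (n + 1) / a n) atTop (𝓝 0)) :
    ∀ᶠ n in atTop, ∑' k, ENNReal.ofReal (a (n + k) / 2) ≤ ENNReal.ofReal (a n) := by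
  have hhalf : ∀ᶠ n in atTop, a (n + 1) ≤ 1 / 2 * a n :=
    (hratio.eventually_le_const one_half_pos).mono fun n hn => (div_le_iff₀ (ha n)).1 hn
  filter_upwards [eventually_forall_ge_atTop.2 hhalf] with n hn
  exact tsum_ofReal_half_le (a := fun k => a (n + k)) (ha n).le fun k => hn (n + k) (by lia)

/-- The index of the first segment `[a n / 2, a n]` that meets `[0, r]`. The value is the junk `0`
if there is none. -/
def firstScale (a : ℕ → ℝ) (r : ℝ) : ℕ :=
  sInf {n | a n / 2 ≤ r}

lemma firstScale_le {n : ℕ} {r : ℝ} (h : a n / 2 ≤ r) : firstScale a r ≤ n :=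
  Nat.sInf_le h

lemma half_apply_firstScale_le (ha : Tendsto a atTop (𝓝 0)) {r : ℝ} (hr : 0 < r) :
    a (firstScale a r) / 2 ≤ r := by
  have hhalf : Tendsto (fun n => a n / 2) atTop (𝓝 0) := by simpa using ha.div_const 2
  exact Nat.sInf_mem (hhalf.eventually_le_const hr).exists

lemma tendsto_firstScale (ha : ∀ n, 0 < a n) (ha₀ : Tendsto a atTop (𝓝 0)) :
    Tendsto (firstScale a) (𝓝[>] 0) atTop := by
  refine tendsto_atTop.2 fun N => ?_
  have hsmall : ∀ᶠ r in 𝓝[>] (0 : ℝ), ∀ n ∈ Finset.range N, r < a n / 2 :=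
    (Finset.eventually_all _).2 fun n _ =>
      mem_of_superset (Ioo_mem_nhdsGT (half_pos (ha n))) fun _ hr => hr.2
  filter_upwards [hsmall, self_mem_nhdsWithin] with r hrN hr
  by_contra! hlt
  exact (half_apply_firstScale_le ha₀ hr).not_gt (hrN _ (Finset.mem_range.2 hlt))

end RapidDecay

section RadialUnion

variable {d : ℕ} {a : ℕ → ℝ} {u : ℕ → EuclideanSpace ℝ (Fin d)} {ε r : ℝ}

lemma iUnion_radialSegment_diff_cone_inter_closedBall_subset (ha : ∀ n, 0 < a n)
    (hu : ∀ n, ‖u n‖ = 1) (hε : 0 < ε) :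
    ((⋃ n, radialSegment (u n) (a n)) \ cone (u (firstScale a r)) ε 0) ∩ closedBall 0 r ⊆
      ⋃ k, radialSegment (u (firstScale a r + 1 + k)) (a (firstScale a r + 1 + k)) := by
  rintro p ⟨⟨hp, hcone⟩, hball⟩
  obtain ⟨m, hm⟩ := mem_iUnion.1 hp
  have hle : firstScale a r ≤ m :=
    firstScale_le (half_le_of_radialSegment_inter_closedBall_nonempty (hu m) ⟨p, hm, hball⟩)
  have hne : firstScale a r ≠ m := by
    rintro rfl
    exact hcone (radialSegment_subset_cone_self (norm_ne_zero_iff.1 (by simp [hu])) (ha _) hε hm)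
  obtain ⟨k, rfl⟩ := Nat.exists_eq_add_of_lt (hle.lt_of_ne hne)
  exact mem_iUnion.2 ⟨k, by rwa [add_right_comm]⟩

lemma densityOffCone_iUnion_radialSegment_le (ha : ∀ n, 0 < a n) (hu : ∀ n, ‖u n‖ = 1)
    (hε : 0 < ε) (hr : a (firstScale a r) / 2 ≤ r)
    (htail : ∑' k, ENNReal.ofReal (a (firstScale a r + 1 + k) / 2) ≤
      ENNReal.ofReal (a (firstScale a r + 1))) :
    densityOffCone 1 (⋃ n, radialSegment (u n) (a n)) 0 (u (firstScale a r)) ε r ≤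
      ENNReal.ofReal (a (firstScale a r + 1) / a (firstScale a r)) := by
  set n := firstScale a r
  have hmass : μH[1] (((⋃ m, radialSegment (u m) (a m)) \ cone (u n) ε 0) ∩ closedBall 0 r) ≤
      ENNReal.ofReal (a (n + 1)) :=
    calc _ ≤ μH[1] (⋃ k, radialSegment (u (n + 1 + k)) (a (n + 1 + k))) :=
          measure_mono (iUnion_radialSegment_diff_cone_inter_closedBall_subset ha hu hε)
      _ ≤ ∑' k, μH[1] (radialSegment (u (n + 1 + k)) (a (n + 1 + k))) := measure_iUnion_le _
      _ = ∑' k, ENNReal.ofReal (a (n + 1 + k) / 2) := by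
          simp only [hausdorffMeasure_radialSegment (hu _)]
      _ ≤ ENNReal.ofReal (a (n + 1)) := htail
  have hscale : a n ≤ 2 * r := by linarith
  rw [densityOffCone, ENNReal.rpow_one, ENNReal.ofReal_div_of_pos (ha n)]
  gcongr

theorem hasWeakApproxTangent_iUnion_radialSegment (ha : ∀ n, 0 < a n)
    (hratio : Tendsto (fun n => a (n + 1) / a n) atTop (𝓝 0)) (hu : ∀ n, ‖u n‖ = 1) :
    HasWeakApproxTangent 1 (⋃ n, radialSegment (u n) (a n)) 0 := by
  refine ⟨1, one_pos, fun r => u (firstScale a r), fun r _ => hu _, fun ε hε => ?_⟩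
  have ha₀ := tendsto_zero_of_tendsto_ratio ha hratio
  have hscale := tendsto_firstScale ha ha₀
  have hbound : Tendsto (fun r => ENNReal.ofReal (a (firstScale a r + 1) / a (firstScale a r)))
      (𝓝[>] 0) (𝓝 0) := by
    simpa using ENNReal.tendsto_ofReal (hratio.comp hscale)
  refine tendsto_of_tendsto_of_tendsto_of_le_of_le' tendsto_const_nhds hbound
    (Eventually.of_forall fun _ => zero_le) ?_
  filter_upwards [self_mem_nhdsWithin, ((tendsto_add_atTop_nat 1).comp hscale).eventually
    (eventually_tsum_tail_ofReal_half_le ha hratio)] with r hr htail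
  exact densityOffCone_iUnion_radialSegment_le ha hu hε (half_apply_firstScale_le ha₀ hr) htail

lemma frequently_radialSegment_subset_iUnion {v : EuclideanSpace ℝ (Fin d)} (ha : ∀ n, 0 < a n)
    (ha₀ : Tendsto a atTop (𝓝 0)) (hv : ∃ᶠ n in atTop, u n = v) :
    ∃ᶠ ρ in 𝓝[>] (0 : ℝ), radialSegment v ρ ⊆ ⋃ n, radialSegment (u n) (a n) := by
  have ha_pos : Tendsto a atTop (𝓝[>] 0) :=
    tendsto_nhdsWithin_iff.2 ⟨ha₀, Eventually.of_forall ha⟩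
  refine ha_pos.frequently (hv.mono ?_)
  rintro n rfl
  exact subset_iUnion (fun n => radialSegment (u n) (a n)) n

end RadialUnion

lemma aseq_pos (n : ℕ) : 0 < aseq n := by
  unfold aseq
  positivity

lemma pow_self_mul_cube_add_le_succ (n : ℕ) :
    n ^ n * n ^ 3 + n ≤ (n + 1) ^ (n + 1) * (n + 1) ^ 3 := by
  have hpos : 1 ≤ (n + 1) ^ n * (n + 1) ^ 3 := Nat.one_le_iff_ne_zero.2 (by positivity)
  calc n ^ n * n ^ 3 + n
      ≤ (n + 1) ^ n * (n + 1) ^ 3 + n * ((n + 1) ^ n * (n + 1) ^ 3) := by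
        gcongr
        · lia
        · lia
        · exact Nat.le_mul_of_pos_right n hpos
    _ = (n + 1) ^ (n + 1) * (n + 1) ^ 3 := by ring

lemma aseq_succ_div_le (n : ℕ) : aseq (n + 1) / aseq n ≤ (1 / 2) ^ n := by
  rw [div_le_iff₀ (aseq_pos n), aseq, aseq, one_div_pow, one_div, ← mul_inv,
    ← pow_add 2 n (n ^ n * n ^ 3)]
  have hexp := (add_comm _ _).trans_le (pow_self_mul_cube_add_le_succ n)
  exact inv_anti₀ (by positivity) (pow_le_pow_right₀ one_le_two hexp)

lemma tendsto_aseq_ratio : Tendsto (fun n => aseq (n + 1) / aseq n) atTop (𝓝 0) :=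
  squeeze_zero (fun _ => (div_pos (aseq_pos _) (aseq_pos _)).le) aseq_succ_div_le
    (tendsto_pow_atTop_nhds_zero_of_lt_one (by norm_num) (by norm_num))

/-- The direction of the `(n + 1)`-st segment of `F`, counted from `1` as in the definition of `F`:
the even-numbered segments lie on the first axis, the odd-numbered ones on the second. -/
def axisDir (n : ℕ) : EuclideanSpace ℝ (Fin 2) :=
  EuclideanSpace.single (if Even n then 1 else 0) 1

lemma axisDir_of_even {n : ℕ} (hn : Even n) : axisDir n = EuclideanSpace.single 1 1 := by
  rw [axisDir, if_pos hn]

lemma axisDir_of_odd {n : ℕ} (hn : Odd n) : axisDir n = EuclideanSpace.single 0 1 := by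
  rw [axisDir, if_neg (Nat.not_even_iff_odd.2 hn)]

lemma norm_axisDir (n : ℕ) : ‖axisDir n‖ = 1 := by
  simp [axisDir]

lemma Fset_eq_iUnion_radialSegment : Fset = ⋃ n, radialSegment (axisDir n) (aseq (n + 1)) := by
  ext p
  have hfirst (ρ : ℝ) :
      p ∈ radialSegment (EuclideanSpace.single 0 1) ρ ↔ p 1 = 0 ∧ p 0 ∈ Icc (ρ / 2) ρ := by
    simp [mem_radialSegment_single_iff, Fin.forall_fin_two]
  have hsecond (ρ : ℝ) :
      p ∈ radialSegment (EuclideanSpace.single 1 1) ρ ↔ p 0 = 0 ∧ p 1 ∈ Icc (ρ / 2) ρ := by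
    simp [mem_radialSegment_single_iff, Fin.forall_fin_two]
  simp only [Fset, mem_union, mem_ofPred_eq, mem_iUnion, ← hfirst, ← hsecond]
  constructor
  · rintro (⟨n, hn, hp⟩ | ⟨n, hn, hp⟩)
    · refine ⟨2 * n - 1, ?_⟩
      rwa [axisDir_of_odd ⟨n - 1, by lia⟩, Nat.sub_add_cancel (by lia)]
    · refine ⟨2 * n - 2, ?_⟩
      rwa [axisDir_of_even ⟨n - 1, by lia⟩, show 2 * n - 2 + 1 = 2 * n - 1 by lia]
  · rintro ⟨n, hp⟩
    rcases Nat.even_or_odd' n with ⟨k, rfl | rfl⟩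
    · rw [axisDir_of_even (even_two_mul k)] at hp
      exact Or.inr ⟨k + 1, by lia, hp⟩
    · rw [axisDir_of_odd (odd_two_mul_add_one k)] at hp
      exact Or.inl ⟨k + 1, by lia, hp⟩

theorem Fset_weak_but_not_strong_approx_tangent :
    HasWeakApproxTangent 1 Fset 0 ∧ ¬ HasApproxTangent 1 Fset 0 := by
  have hpos (n : ℕ) : 0 < aseq (n + 1) := aseq_pos (n + 1)
  have hratio : Tendsto (fun n => aseq (n + 1 + 1) / aseq (n + 1)) atTop (𝓝 0) :=
    tendsto_aseq_ratio.comp (tendsto_add_atTop_nat 1)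
  have hzero : Tendsto (fun n => aseq (n + 1)) atTop (𝓝 0) :=
    tendsto_zero_of_tendsto_ratio hpos hratio
  rw [Fset_eq_iUnion_radialSegment]
  refine ⟨hasWeakApproxTangent_iUnion_radialSegment hpos hratio norm_axisDir,
    not_hasApproxTangent_of_frequently_radialSegment_subset
      (v := EuclideanSpace.single 0 1) (w := EuclideanSpace.single 1 1) (by simp) (by simp)
      (disjoint_span_singleton_of_inner_eq_zero (by simp [EuclideanSpace.inner_single_left])) ?_ ?_⟩
  · exact frequently_radialSegment_subset_iUnion hpos hzero
      (Nat.frequently_odd.mono fun _ => axisDir_of_odd)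
  · exact frequently_radialSegment_subset_iUnion hpos hzero
      (Nat.frequently_even.mono fun _ => axisDir_of_even)

end
end

section
/- Let a_n = 2^{−nⁿ·n³} and F = (⋃_{n∈ℕ} [a_{2n}/2, a_{2n}]×{0}) ∪ (⋃_{n∈ℕ} {0}×[a_{2n−1}/2, a_{2n−1}]) ⊂ ℝ². Then I_p^1(F) < ∞ for every p ∈ (0,∞). -/
open MeasureTheory Metric Set Filter
open scoped ENNReal Topology Classical

noncomputable section

/-!
Cover `F` by its segments `S n`, `n ≥ 1`, of length `a n / 2` at distance `a n / 2` from the origin.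
If `x` and `y` lie in different segments, then `κ (x, y, z) ≤ 2 / ‖x - y‖`, which is at most
`8 / a n` for the longer one `S n` of the two. If both lie in `S n`, the curvature vanishes unless
`z ∈ S m` lies on the other axis; then it is at most `2 / ‖z‖ ≤ 4 / a (n - 1)` for `m < n`, and at
most `2 * ‖z‖ / (‖x‖ * ‖y‖) ≤ 2` for `m > n`, because `a m ≤ (a n / 2) ^ 2`. So on `S i × S j` the
curvature `κ_i` is bounded by `c i * c j` with `c n = 8 / a (n - 1)`, and the energy is bounded by
the square of `∑ c n ^ p * a n`, which converges because `a n ≤ (a (n - 1) / 2) ^ n`.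
-/

section Curvature

lemma exists_norm_add_smul_mul_norm_le {E : Type*} [NormedAddCommGroup E] [InnerProductSpace ℝ E]
    (u w : E) : ∃ t : ℝ, ‖u + t • w‖ * ‖w‖ ≤ ‖u‖ * ‖u + w‖ := by
  rcases eq_or_ne w 0 with rfl | hw
  · exact ⟨0, by simpa using mul_self_nonneg ‖u‖⟩
  have hw' : ‖w‖ ≠ 0 := norm_ne_zero_iff.2 hw
  refine ⟨-inner ℝ u w / ‖w‖ ^ 2, le_of_sq_le_sq ?_ (by positivity)⟩
  calc (‖u + (-inner ℝ u w / ‖w‖ ^ 2) • w‖ * ‖w‖) ^ 2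
      = ‖u‖ ^ 2 * ‖w‖ ^ 2 - inner ℝ u w ^ 2 := by
        rw [mul_pow, norm_add_sq_real, real_inner_smul_right, norm_smul, mul_pow, Real.norm_eq_abs,
          sq_abs]
        field_simp
        ring
    _ ≤ ‖u‖ ^ 2 * ‖w‖ ^ 2 - inner ℝ u w ^ 2 + (‖u‖ ^ 2 + inner ℝ u w) ^ 2 :=
        le_add_of_nonneg_right (sq_nonneg _)
    _ = (‖u‖ * ‖u + w‖) ^ 2 := by
        rw [mul_pow, norm_add_sq_real]
        ring

lemma norm_le_norm_sub_of_inner_eq_zero {E : Type*} [NormedAddCommGroup E]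
    [InnerProductSpace ℝ E] {u v : E} (h : inner ℝ u v = 0) : ‖u‖ ≤ ‖u - v‖ := by
  have pythagoras := norm_sub_sq_eq_norm_sq_add_norm_sq_real h
  exact le_of_sq_le_sq (by nlinarith [mul_self_nonneg ‖v‖]) (norm_nonneg _)

variable {d : ℕ} {x y z : EuclideanSpace ℝ (Fin d)}

lemma infDist_lineThrough_mul_norm_sub_le (x y z : EuclideanSpace ℝ (Fin d)) :
    infDist z (lineThrough x y) * ‖x - y‖ ≤ ‖x - z‖ * ‖y - z‖ := by
  obtain ⟨t, ht⟩ := exists_norm_add_smul_mul_norm_le (x - z) (y - x)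
  calc infDist z (lineThrough x y) * ‖x - y‖
      ≤ dist z (x + t • (y - x)) * ‖x - y‖ := by
        gcongr
        exact infDist_le_dist_of_mem ⟨t, rfl⟩
    _ = ‖x - z + t • (y - x)‖ * ‖y - x‖ := by
        rw [dist_comm, dist_eq_norm, norm_sub_rev x y, add_sub_right_comm]
    _ ≤ ‖x - z‖ * ‖y - z‖ := by rwa [sub_add_sub_cancel'] at ht

lemma kappa_le_ofReal {C : ℝ}
    (h : x ≠ y → 2 * infDist z (lineThrough x y) ≤ C * (‖x - z‖ * ‖y - z‖)) :
    kappa x y z ≤ ENNReal.ofReal C := by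
  unfold kappa
  split_ifs with hne
  · obtain ⟨hxy, hyz, hxz⟩ := hne
    have hx : 0 < ‖x - z‖ := norm_sub_pos_iff.2 hxz
    have hy : 0 < ‖y - z‖ := norm_sub_pos_iff.2 hyz
    exact ENNReal.ofReal_le_ofReal ((div_le_iff₀ (mul_pos hx hy)).2 (h hxy))
  · exact zero_le

lemma kappa_le_two_div_norm_sub (x y z : EuclideanSpace ℝ (Fin d)) :
    kappa x y z ≤ ENNReal.ofReal (2 / ‖x - y‖) := by
  refine kappa_le_ofReal fun hxy => ?_
  have hpos : 0 < ‖x - y‖ := norm_sub_pos_iff.2 hxy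
  rw [div_mul_eq_mul_div, le_div_iff₀ hpos, mul_assoc]
  exact mul_le_mul_of_nonneg_left (infDist_lineThrough_mul_norm_sub_le x y z) zero_le_two

lemma kappa_eq_zero_of_mem_lineThrough (hz : z ∈ lineThrough x y) : kappa x y z = 0 := by
  simp [kappa, infDist_zero_of_mem hz]

lemma infDist_lineThrough_le_norm (h0 : 0 ∈ lineThrough x y) :
    infDist z (lineThrough x y) ≤ ‖z‖ :=
  (infDist_le_dist_of_mem h0).trans_eq (dist_zero_right z)

lemma kappa_le_two_div_norm (h0 : 0 ∈ lineThrough x y) (hx : inner ℝ x z = 0)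
    (hy : inner ℝ y z = 0) (hz : z ≠ 0) : kappa x y z ≤ ENNReal.ofReal (2 / ‖z‖) := by
  have hz' : ‖z‖ ≠ 0 := norm_ne_zero_iff.2 hz
  have hxz : ‖z‖ ≤ ‖x - z‖ := by
    rw [norm_sub_rev]
    exact norm_le_norm_sub_of_inner_eq_zero (by rwa [real_inner_comm])
  have hyz : ‖z‖ ≤ ‖y - z‖ := by
    rw [norm_sub_rev]
    exact norm_le_norm_sub_of_inner_eq_zero (by rwa [real_inner_comm])
  refine kappa_le_ofReal fun _ => ?_
  calc 2 * infDist z (lineThrough x y) ≤ 2 * ‖z‖ := by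
        gcongr
        exact infDist_lineThrough_le_norm h0
    _ = 2 / ‖z‖ * (‖z‖ * ‖z‖) := by field_simp
    _ ≤ 2 / ‖z‖ * (‖x - z‖ * ‖y - z‖) := by gcongr

lemma kappa_le_two_mul_norm_div (h0 : 0 ∈ lineThrough x y) (hxz : inner ℝ x z = 0)
    (hyz : inner ℝ y z = 0) (hx : x ≠ 0) (hy : y ≠ 0) :
    kappa x y z ≤ ENNReal.ofReal (2 * ‖z‖ / (‖x‖ * ‖y‖)) := by
  have hx' : ‖x‖ ≠ 0 := norm_ne_zero_iff.2 hx
  have hy' : ‖y‖ ≠ 0 := norm_ne_zero_iff.2 hy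
  refine kappa_le_ofReal fun _ => ?_
  calc 2 * infDist z (lineThrough x y) ≤ 2 * ‖z‖ := by
        gcongr
        exact infDist_lineThrough_le_norm h0
    _ = 2 * ‖z‖ / (‖x‖ * ‖y‖) * (‖x‖ * ‖y‖) := by field_simp
    _ ≤ 2 * ‖z‖ / (‖x‖ * ‖y‖) * (‖x - z‖ * ‖y - z‖) := by
        gcongr
        · exact norm_le_norm_sub_of_inner_eq_zero hxz
        · exact norm_le_norm_sub_of_inner_eq_zero hyz

end Curvature

lemma energyI_lt_top_of_subset_iUnion {d : ℕ} {ι : Type*} [Countable ι] {p α : ℝ} (hp : 0 ≤ p)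
    {X : Set (EuclideanSpace ℝ (Fin d))} {S : ι → Set (EuclideanSpace ℝ (Fin d))}
    {c : ι → ℝ≥0∞} (hX : X ⊆ ⋃ i, S i)
    (hκ : ∀ i j, ∀ x ∈ S i, ∀ y ∈ S j, kappaI X x y ≤ c i * c j)
    (hsum : ∑' i, c i ^ p * μH[α] (S i) < ⊤) : energyI p α X < ⊤ := by
  have lintegral_le_tsum (f : EuclideanSpace ℝ (Fin d) → ℝ≥0∞) :
      ∫⁻ x in X, f x ∂μH[α] ≤ ∑' i, ∫⁻ x in S i, f x ∂μH[α] :=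
    (lintegral_mono_set hX).trans (lintegral_iUnion_le S f)
  set A : ℝ≥0∞ := ∑' i, c i ^ p * μH[α] (S i)
  have inner_le (j : ι) (y) (hy : y ∈ S j) :
      ∫⁻ x in X, kappaI X x y ^ p ∂μH[α] ≤ A * c j ^ p :=
    calc ∫⁻ x in X, kappaI X x y ^ p ∂μH[α]
        ≤ ∑' i, ∫⁻ x in S i, kappaI X x y ^ p ∂μH[α] := lintegral_le_tsum _
      _ ≤ ∑' i, ∫⁻ _ in S i, c i ^ p * c j ^ p ∂μH[α] := by
          refine ENNReal.tsum_le_tsum fun i => setLIntegral_mono measurable_const fun x hx => ?_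
          rw [← ENNReal.mul_rpow_of_nonneg _ _ hp]
          gcongr
          exact hκ i j x hx y hy
      _ = A * c j ^ p := by
          simp_rw [setLIntegral_const, mul_right_comm _ (c j ^ p), ENNReal.tsum_mul_right, A]
  calc energyI p α X
      ≤ ∑' j, ∫⁻ y in S j, ∫⁻ x in X, kappaI X x y ^ p ∂μH[α] ∂μH[α] := lintegral_le_tsum _
    _ ≤ ∑' j, ∫⁻ _ in S j, A * c j ^ p ∂μH[α] :=
        ENNReal.tsum_le_tsum fun j => setLIntegral_mono measurable_const (inner_le j)
    _ = A * A := by simp_rw [setLIntegral_const, mul_assoc, ENNReal.tsum_mul_left, A]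
    _ < ⊤ := ENNReal.mul_lt_top hsum hsum

/-- The segment `[r / 2, r]` on the `i`-th coordinate axis of `ℝ^d`, the building block
of `Fset`. -/
def axisSegment {d : ℕ} (i : Fin d) (r : ℝ) : Set (EuclideanSpace ℝ (Fin d)) :=
  EuclideanSpace.single i '' Icc (r / 2) r

section AxisSegment

variable {d : ℕ} {i j : Fin d} {r s t : ℝ} {x y z : EuclideanSpace ℝ (Fin d)}

lemma hausdorffMeasure_axisSegment_le (i : Fin d) (hr : 0 ≤ r) :
    μH[1] (axisSegment i r) ≤ ENNReal.ofReal r := by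
  have isometry_single : Isometry (EuclideanSpace.single i : ℝ → EuclideanSpace ℝ (Fin d)) :=
    .of_dist_eq fun s t => PiLp.dist_single_same 2 (fun _ => ℝ) i s t
  rw [axisSegment, isometry_single.hausdorffMeasure_image (Or.inl zero_le_one),
    hausdorffMeasure_real, Real.volume_Icc]
  exact ENNReal.ofReal_le_ofReal (by linarith)

lemma norm_mem_Icc_of_mem_axisSegment (hr : 0 ≤ r) (hx : x ∈ axisSegment i r) :
    ‖x‖ ∈ Icc (r / 2) r := by
  obtain ⟨s, hs, rfl⟩ := hx
  rwa [PiLp.norm_single, Real.norm_of_nonneg (by linarith [hs.1])]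

lemma ne_zero_of_mem_axisSegment (hr : 0 < r) (hx : x ∈ axisSegment i r) : x ≠ 0 :=
  norm_pos_iff.1 <| (half_pos hr).trans_le (norm_mem_Icc_of_mem_axisSegment hr.le hx).1

lemma inner_eq_zero_of_mem_axisSegment (hij : i ≠ j) (hx : x ∈ axisSegment i r)
    (hy : y ∈ axisSegment j s) : inner ℝ x y = 0 := by
  obtain ⟨-, -, rfl⟩ := hx
  obtain ⟨-, -, rfl⟩ := hy
  simp [EuclideanSpace.inner_single_left, hij]

lemma single_mem_lineThrough_single (hst : s ≠ t) (i : Fin d) (u : ℝ) :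
    EuclideanSpace.single i u ∈
      lineThrough (EuclideanSpace.single i s) (EuclideanSpace.single i t) := by
  have hts : t - s ≠ 0 := sub_ne_zero.2 hst.symm
  refine ⟨(u - s) / (t - s), ?_⟩
  ext k
  rcases eq_or_ne k i with rfl | hki
  · simp [div_mul_cancel₀ _ hts]
  · simp [hki]

lemma single_mem_lineThrough_of_mem_axisSegment (hxy : x ≠ y) (hx : x ∈ axisSegment i r)
    (hy : y ∈ axisSegment i s) (u : ℝ) : EuclideanSpace.single i u ∈ lineThrough x y := by
  obtain ⟨s, -, rfl⟩ := hx
  obtain ⟨t, -, rfl⟩ := hy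
  exact single_mem_lineThrough_single (ne_of_apply_ne _ hxy) i u

lemma zero_mem_lineThrough_of_mem_axisSegment (hxy : x ≠ y) (hx : x ∈ axisSegment i r)
    (hy : y ∈ axisSegment i s) : 0 ∈ lineThrough x y := by
  have single_zero : EuclideanSpace.single i (0 : ℝ) = 0 := (PiLp.single_eq_zero_iff 2 i).2 rfl
  exact single_zero ▸ single_mem_lineThrough_of_mem_axisSegment hxy hx hy 0

lemma kappa_eq_zero_of_mem_axisSegment (hx : x ∈ axisSegment i r) (hy : y ∈ axisSegment i s)
    (hz : z ∈ axisSegment i t) : kappa x y z = 0 := by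
  rcases eq_or_ne x y with rfl | hxy
  · simp [kappa]
  obtain ⟨u, -, rfl⟩ := hz
  exact kappa_eq_zero_of_mem_lineThrough
    (single_mem_lineThrough_of_mem_axisSegment hxy hx hy u)

lemma kappa_le_four_div_of_mem_axisSegment (hij : i ≠ j) (ht : 0 < t)
    (hx : x ∈ axisSegment i r) (hy : y ∈ axisSegment i s) (hz : z ∈ axisSegment j t) :
    kappa x y z ≤ ENNReal.ofReal (4 / t) := by
  rcases eq_or_ne x y with rfl | hxy
  · simp [kappa]
  refine (kappa_le_two_div_norm (zero_mem_lineThrough_of_mem_axisSegment hxy hx hy)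
    (inner_eq_zero_of_mem_axisSegment hij hx hz) (inner_eq_zero_of_mem_axisSegment hij hy hz)
    (ne_zero_of_mem_axisSegment ht hz)).trans (ENNReal.ofReal_le_ofReal ?_)
  calc 2 / ‖z‖ ≤ 2 / (t / 2) := by
        gcongr
        exact (norm_mem_Icc_of_mem_axisSegment ht.le hz).1
    _ = 4 / t := by ring

lemma kappa_le_two_mul_div_of_mem_axisSegment (hij : i ≠ j) (hr : 0 < r) (hs : 0 < s)
    (ht : 0 ≤ t) (hx : x ∈ axisSegment i r) (hy : y ∈ axisSegment i s)
    (hz : z ∈ axisSegment j t) :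
    kappa x y z ≤ ENNReal.ofReal (2 * t / (r / 2 * (s / 2))) := by
  rcases eq_or_ne x y with rfl | hxy
  · simp [kappa]
  refine (kappa_le_two_mul_norm_div (zero_mem_lineThrough_of_mem_axisSegment hxy hx hy)
    (inner_eq_zero_of_mem_axisSegment hij hx hz) (inner_eq_zero_of_mem_axisSegment hij hy hz)
    (ne_zero_of_mem_axisSegment hr hx) (ne_zero_of_mem_axisSegment hs hy)).trans
    (ENNReal.ofReal_le_ofReal ?_)
  gcongr
  · exact (norm_mem_Icc_of_mem_axisSegment ht hz).2
  · exact (norm_mem_Icc_of_mem_axisSegment hr.le hx).1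
  · exact (norm_mem_Icc_of_mem_axisSegment hs.le hy).1

end AxisSegment

/-- Sequences in `(0, 1]` decreasing so fast that every power of `1 / a n` is eventually dominated
by `1 / a (n + 1)`. The factor `1 / 2` is what separates consecutive segments `[a n / 2, a n]` and
makes the resulting series geometric. -/
structure IsSuperlacunary (a : ℕ → ℝ) : Prop where
  pos : ∀ n, 0 < a n
  le_one : ∀ n, a n ≤ 1
  succ_le : ∀ n, a (n + 1) ≤ (a n / 2) ^ (n + 1)

namespace IsSuperlacunary

variable {a : ℕ → ℝ}

lemma antitone (ha : IsSuperlacunary a) : Antitone a := by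
  refine antitone_nat_of_succ_le fun n => ?_
  have hpos := ha.pos n
  calc a (n + 1) ≤ (a n / 2) ^ (n + 1) := ha.succ_le n
    _ ≤ a n / 2 := pow_le_of_le_one (by positivity) (by linarith [ha.le_one n]) n.succ_ne_zero
    _ ≤ a n := half_le_self hpos.le

lemma le_sq_of_lt (ha : IsSuperlacunary a) {n m : ℕ} (hn : n ≠ 0) (hnm : n < m) :
    a m ≤ (a n / 2) ^ 2 := by
  have hpos := ha.pos n
  calc a m ≤ a (n + 1) := ha.antitone hnm
    _ ≤ (a n / 2) ^ (n + 1) := ha.succ_le n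
    _ ≤ (a n / 2) ^ 2 :=
      pow_le_pow_of_le_one (by positivity) (by linarith [ha.le_one n]) (by omega)

lemma one_le_eight_div (ha : IsSuperlacunary a) (n : ℕ) : 1 ≤ 8 / a n :=
  (one_le_div (ha.pos n)).2 (by linarith [ha.le_one n])

lemma summable_div_rpow_mul_succ (ha : IsSuperlacunary a) {C : ℝ} (hC : 0 ≤ C) (p : ℝ) :
    Summable fun n => (C / a n) ^ p * a (n + 1) := by
  obtain ⟨N, hN⟩ := exists_nat_ge p
  have summable_geometric : Summable fun n : ℕ => C ^ p * (1 / 2 : ℝ) ^ (n + 1) :=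
    ((summable_nat_add_iff 1).2 summable_geometric_two).mul_left _
  refine .of_norm_bounded_eventually_nat summable_geometric ?_
  filter_upwards [eventually_ge_atTop N] with n hn
  have hpos := ha.pos n
  have hpos' := ha.pos (n + 1)
  have pow_le_rpow : a n ^ (n + 1) ≤ a n ^ p := by
    rw [← Real.rpow_natCast]
    refine Real.rpow_le_rpow_of_exponent_ge hpos (ha.le_one n) (hN.trans ?_)
    exact_mod_cast hn.trans n.le_succ
  calc ‖(C / a n) ^ p * a (n + 1)‖ = C ^ p / a n ^ p * a (n + 1) := by
        rw [Real.norm_of_nonneg (by positivity), Real.div_rpow hC hpos.le]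
    _ ≤ C ^ p / a n ^ p * (a n ^ (n + 1) * (1 / 2) ^ (n + 1)) := by
        gcongr
        rw [← mul_pow, mul_one_div]
        exact ha.succ_le n
    _ ≤ C ^ p / a n ^ p * (a n ^ p * (1 / 2) ^ (n + 1)) := by gcongr
    _ = C ^ p * (1 / 2) ^ (n + 1) := by field_simp

variable {d : ℕ} {axis : ℕ → Fin d} {i j k : ℕ} {x y z : EuclideanSpace ℝ (Fin d)}

lemma le_norm_sub_of_ne (ha : IsSuperlacunary a) (hij : i ≠ j)
    (hx : x ∈ axisSegment (axis (i + 1)) (a (i + 1)))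
    (hy : y ∈ axisSegment (axis (j + 1)) (a (j + 1))) : a (max i j) / 4 ≤ ‖x - y‖ := by
  wlog hlt : i < j generalizing i j x y
  · rw [max_comm, norm_sub_rev]
    exact this hij.symm hy hx (hij.symm.lt_of_le (not_lt.1 hlt))
  have hpos := ha.pos (i + 1)
  have le_norm_x := (norm_mem_Icc_of_mem_axisSegment hpos.le hx).1
  have norm_y_le := (norm_mem_Icc_of_mem_axisSegment (ha.pos _).le hy).2
  have small_y : a (j + 1) ≤ a (i + 1) / 4 := by
    nlinarith [ha.le_sq_of_lt i.succ_ne_zero (Nat.succ_lt_succ hlt), ha.le_one (i + 1)]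
  calc a (max i j) / 4 ≤ a (i + 1) / 4 := by
        rw [max_eq_right hlt.le]
        gcongr
        exact ha.antitone hlt
    _ ≤ ‖x‖ - ‖y‖ := by linarith
    _ ≤ ‖x - y‖ := norm_sub_norm_le x y

lemma kappa_le_of_mem_same (ha : IsSuperlacunary a)
    (hx : x ∈ axisSegment (axis (i + 1)) (a (i + 1)))
    (hy : y ∈ axisSegment (axis (i + 1)) (a (i + 1)))
    (hz : z ∈ axisSegment (axis (k + 1)) (a (k + 1))) :
    kappa x y z ≤ ENNReal.ofReal (8 / a i) := by
  have hpos := ha.pos i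
  by_cases haxis : axis (i + 1) = axis (k + 1)
  · rw [kappa_eq_zero_of_mem_axisSegment hx hy (haxis ▸ hz)]
    exact zero_le
  have hik : i ≠ k := fun h => haxis (by rw [h])
  rcases hik.lt_or_gt with hlt | hgt
  · have hpos' := ha.pos (i + 1)
    refine (kappa_le_two_mul_div_of_mem_axisSegment haxis hpos' hpos' (ha.pos _).le hx hy hz).trans
      (ENNReal.ofReal_le_ofReal ?_)
    calc 2 * a (k + 1) / (a (i + 1) / 2 * (a (i + 1) / 2))
        ≤ 2 * (a (i + 1) / 2) ^ 2 / (a (i + 1) / 2) ^ 2 := by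
          rw [← sq]
          gcongr
          exact ha.le_sq_of_lt i.succ_ne_zero (Nat.succ_lt_succ hlt)
      _ = 2 := mul_div_cancel_right₀ 2 (by positivity)
      _ ≤ 8 / a i := by
          rw [le_div_iff₀ hpos]
          linarith [ha.le_one i]
  · refine (kappa_le_four_div_of_mem_axisSegment haxis (ha.pos _) hx hy hz).trans
      (ENNReal.ofReal_le_ofReal ?_)
    gcongr
    · norm_num
    · exact ha.antitone hgt

lemma kappa_le_max (ha : IsSuperlacunary a)
    (hx : x ∈ axisSegment (axis (i + 1)) (a (i + 1)))
    (hy : y ∈ axisSegment (axis (j + 1)) (a (j + 1)))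
    (hz : z ∈ axisSegment (axis (k + 1)) (a (k + 1))) :
    kappa x y z ≤ ENNReal.ofReal (8 / a (max i j)) := by
  rcases eq_or_ne i j with rfl | hij
  · rw [max_self]
    exact ha.kappa_le_of_mem_same hx hy hz
  · have hpos := ha.pos (max i j)
    refine (kappa_le_two_div_norm_sub x y z).trans (ENNReal.ofReal_le_ofReal ?_)
    calc 2 / ‖x - y‖ ≤ 2 / (a (max i j) / 4) := by
          gcongr
          exact ha.le_norm_sub_of_ne hij hx hy
      _ = 8 / a (max i j) := by ring

lemma kappa_le_mul (ha : IsSuperlacunary a)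
    (hx : x ∈ axisSegment (axis (i + 1)) (a (i + 1)))
    (hy : y ∈ axisSegment (axis (j + 1)) (a (j + 1)))
    (hz : z ∈ axisSegment (axis (k + 1)) (a (k + 1))) :
    kappa x y z ≤ ENNReal.ofReal (8 / a i) * ENNReal.ofReal (8 / a j) := by
  have one_le (n : ℕ) : 1 ≤ ENNReal.ofReal (8 / a n) :=
    ENNReal.one_le_ofReal.2 (ha.one_le_eight_div n)
  refine (ha.kappa_le_max hx hy hz).trans ?_
  rcases max_choice i j with h | h <;> rw [h]
  · exact le_mul_of_one_le_right' (one_le j)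
  · exact le_mul_of_one_le_left' (one_le i)

lemma tsum_rpow_mul_hausdorffMeasure_axisSegment_lt_top (ha : IsSuperlacunary a)
    (axis : ℕ → Fin d) {p : ℝ} (hp : 0 ≤ p) :
    ∑' n, ENNReal.ofReal (8 / a n) ^ p * μH[1] (axisSegment (axis (n + 1)) (a (n + 1))) < ⊤ := by
  refine lt_of_le_of_lt (ENNReal.tsum_le_tsum fun n => ?_)
    (ha.summable_div_rpow_mul_succ (by norm_num : (0 : ℝ) ≤ 8) p).tsum_ofReal_lt_top
  have hpos := ha.pos n
  rw [ENNReal.ofReal_mul (by positivity), ENNReal.ofReal_rpow_of_nonneg (by positivity) hp]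
  gcongr
  exact hausdorffMeasure_axisSegment_le _ (ha.pos _).le

end IsSuperlacunary

theorem Fset_energyI_lt_top_general {d : ℕ} {a : ℕ → ℝ} (ha : IsSuperlacunary a)
    {axis : ℕ → Fin d} {X : Set (EuclideanSpace ℝ (Fin d))}
    (hX : X ⊆ ⋃ n, axisSegment (axis (n + 1)) (a (n + 1))) {p : ℝ} (hp : 0 ≤ p) :
    energyI p 1 X < ⊤ := by
  refine energyI_lt_top_of_subset_iUnion hp hX (c := fun n => ENNReal.ofReal (8 / a n))
    (fun i j x hx y hy => iSup₂_le fun z hz => ?_)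
    (ha.tsum_rpow_mul_hausdorffMeasure_axisSegment_lt_top axis hp)
  obtain ⟨k, hk⟩ := mem_iUnion.1 (hX hz)
  exact ha.kappa_le_mul hx hy hk

lemma succ_mul_aseq_exponent_add_one_le (n : ℕ) :
    (n + 1) * (n ^ n * n ^ 3 + 1) ≤ (n + 1) ^ (n + 1) * (n + 1) ^ 3 :=
  calc (n + 1) * (n ^ n * n ^ 3 + 1) ≤ (n + 1) * (n ^ n * n ^ 3 + n ^ n) := by
        gcongr
        exact Nat.pow_self_pos
    _ = (n + 1) * (n ^ n * (n ^ 3 + 1)) := by ring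
    _ ≤ (n + 1) * ((n + 1) ^ n * (n + 1) ^ 3) := by
        gcongr
        · exact n.le_succ
        · simpa using pow_add_pow_le n.zero_le zero_le_one three_ne_zero
    _ = (n + 1) ^ (n + 1) * (n + 1) ^ 3 := by ring

lemma isSuperlacunary_aseq : IsSuperlacunary aseq where
  pos n := by unfold aseq; positivity
  le_one n := inv_le_one_of_one_le₀ (one_le_pow₀ one_le_two)
  succ_le n :=
    calc aseq (n + 1) ≤ ((2 : ℝ) ^ ((n + 1) * (n ^ n * n ^ 3 + 1)))⁻¹ := by
          unfold aseq
          gcongr ?_⁻¹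
          exact pow_le_pow_right₀ one_le_two (succ_mul_aseq_exponent_add_one_le n)
      _ = (aseq n / 2) ^ (n + 1) := by
          rw [aseq, mul_comm (n + 1), pow_mul, ← inv_pow, pow_succ 2, mul_inv, div_eq_mul_inv]

lemma Fset_subset_iUnion_axisSegment :
    Fset ⊆ ⋃ n : ℕ, axisSegment (if Even (n + 1) then 0 else 1) (aseq (n + 1)) := by
  rintro x (⟨n, hn, hx1, hx0⟩ | ⟨n, hn, hx0, hx1⟩)
  · refine mem_iUnion.2 ⟨2 * n - 1, ?_⟩
    rw [Nat.sub_add_cancel (by omega), if_pos (even_two_mul n)]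
    refine ⟨x 0, hx0, ?_⟩
    ext i
    fin_cases i <;> simp [hx1]
  · refine mem_iUnion.2 ⟨2 * n - 2, ?_⟩
    have not_even : ¬Even (2 * n - 1) := by grind
    rw [show 2 * n - 2 + 1 = 2 * n - 1 by omega, if_neg not_even]
    refine ⟨x 1, hx1, ?_⟩
    ext i
    fin_cases i <;> simp [hx0]

theorem Fset_energyI_lt_top (p : ℝ) (hp : 0 < p) : energyI p 1 Fset < ⊤ :=
  Fset_energyI_lt_top_general (axis := fun n => if Even n then 0 else 1) isSuperlacunary_aseq
    Fset_subset_iUnion_axisSegment hp.le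

end
end

section
/- Let α ∈ [1,∞), p ∈ (0,∞) and X ⊂ ℝⁿ. If U_p^α(X) < ∞, or I_p^α(X) < ∞, or M_p^α(X) < ∞, then H^α(X ∩ B̄_R(x)) < ∞ for every x ∈ ℝⁿ and every R > 0. -/
open MeasureTheory Metric Set Filter
open scoped ENNReal Topology Classical

noncomputable section

/-!
If `H^α` restricted to `X` is not locally finite, it is infinite on every neighbourhood of some
point `x₀`. Since `α ≥ 1`, lines carry finite `H^α` measure near `x₀`, so the restricted measure
remains infinite on every neighbourhood of `x₀` after removing `x₀` or a line through it. By the law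
of sines, `κ(·, y, z)` is bounded below by a positive constant near `x₀` whenever `x₀, y, z` are not
collinear, so the integral in the first variable diverges for all such `y, z`; in the multiple
integrals, this happens for enough pairs `y, z` to make the outer integrals diverge as well.
-/

section FiniteAtFilter

variable {β : Type*} [MeasurableSpace β] {μ : Measure β} {l : Filter β}

lemma lintegral_eq_top_of_eventually_le [l.IsMeasurablyGenerated] (h : ¬ μ.FiniteAtFilter l)
    {c : ℝ≥0∞} (hc : c ≠ 0) {f : β → ℝ≥0∞} (hf : ∀ᶠ x in l, c ≤ f x) : ∫⁻ x, f x ∂μ = ⊤ := by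
  obtain ⟨s, hsl, hs, hsf⟩ := hf.exists_measurable_mem
  have hμs : μ s = ⊤ := not_lt_top_iff.1 fun hlt => h ⟨s, hsl, hlt⟩
  refine top_le_iff.1 ?_
  calc
    ⊤ = ∫⁻ _ in s, c ∂μ := by rw [setLIntegral_const, hμs, ENNReal.mul_top hc]
    _ ≤ ∫⁻ x in s, f x ∂μ := setLIntegral_mono' hs hsf
    _ ≤ ∫⁻ x, f x ∂μ := setLIntegral_le_lintegral s f

lemma inter_nonempty_of_not_finiteAtFilter_restrict {s X : Set β} (hs : MeasurableSet s)
    (hsl : s ∈ l) (h : ¬ (μ.restrict X).FiniteAtFilter l) : (s ∩ X).Nonempty := by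
  by_contra hempty
  refine h ⟨s, hsl, ?_⟩
  rw [Measure.restrict_apply hs, not_nonempty_iff_eq_empty.1 hempty, measure_empty]
  exact ENNReal.zero_lt_top

lemma not_finiteAtFilter_nhdsWithin_compl [TopologicalSpace β] {x : β} {s : Set β}
    (h : ¬ μ.FiniteAtFilter (𝓝 x)) (hs : μ.FiniteAtFilter (𝓝[s] x)) :
    ¬ μ.FiniteAtFilter (𝓝[sᶜ] x) := by
  intro hsc
  apply h
  rw [← nhdsWithin_univ, ← union_compl_self s, nhdsWithin_union]
  exact hs.filterSup hsc

end FiniteAtFilter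

section Line

variable {V P : Type*} [NormedAddCommGroup V] [NormedSpace ℝ V] [MetricSpace P]
  [NormedAddTorsor V P] {x y z : P}

lemma not_collinear_of_notMem_line (hxy : x ≠ y) (hz : z ∉ line[ℝ, x, y]) :
    ¬ Collinear ℝ {x, y, z} :=
  fun h => hz (h.mem_affineSpan_of_mem_of_ne (by simp) (by simp) (by simp) hxy)

lemma lineMap_image_Icc_mem_nhdsWithin_line (hxy : x ≠ y) :
    AffineMap.lineMap x y '' Icc (-1 : ℝ) 1 ∈ 𝓝[line[ℝ, x, y]] x := by
  have hdist : 0 < dist x y := dist_pos.2 hxy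
  refine mem_nhdsWithin_iff.2 ⟨dist x y, hdist, ?_⟩
  rintro q ⟨hqball, hqline⟩
  obtain ⟨t, rfl⟩ := mem_affineSpan_pair_iff_exists_lineMap_eq.1 hqline
  rw [mem_ball, dist_lineMap_left, Real.norm_eq_abs, mul_lt_iff_lt_one_left hdist] at hqball
  exact mem_image_of_mem _ (abs_le.1 hqball.le)

variable [MeasurableSpace P] [BorelSpace P]

lemma measurableSet_line (x y : P) : MeasurableSet (line[ℝ, x, y] : Set P) :=
  (AffineSubspace.closed_of_finiteDimensional line[ℝ, x, y]).measurableSet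

lemma finiteAtFilter_hausdorffMeasure_nhdsWithin_line {α : ℝ} (hα : 1 ≤ α) (hxy : x ≠ y) :
    (μH[α] : Measure P).FiniteAtFilter (𝓝[line[ℝ, x, y]] x) := by
  refine ⟨_, lineMap_image_Icc_mem_nhdsWithin_line hxy, ?_⟩
  refine (Measure.hausdorffMeasure_mono hα _).trans_lt ?_
  rw [hausdorffMeasure_lineMap_image, hausdorffMeasure_real]
  exact ENNReal.mul_lt_top ENNReal.coe_lt_top measure_Icc_lt_top

variable {α : ℝ} {X : Set P}

lemma not_finiteAtFilter_restrict_nhdsWithin_compl_line (hα : 1 ≤ α)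
    (hX : ¬ (μH[α].restrict X).FiniteAtFilter (𝓝 x)) (hxy : x ≠ y) :
    ¬ (μH[α].restrict X).FiniteAtFilter (𝓝[(line[ℝ, x, y] : Set P)ᶜ] x) :=
  not_finiteAtFilter_nhdsWithin_compl hX <|
    (finiteAtFilter_hausdorffMeasure_nhdsWithin_line hα hxy).measure_mono Measure.restrict_le_self

lemma not_finiteAtFilter_restrict_nhdsNE (hα : 0 < α)
    (hX : ¬ (μH[α].restrict X).FiniteAtFilter (𝓝 x)) :
    ¬ (μH[α].restrict X).FiniteAtFilter (𝓝[≠] x) := by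
  have := Measure.nullSingletonClass_hausdorff P hα
  refine not_finiteAtFilter_nhdsWithin_compl hX ⟨{x}, self_mem_nhdsWithin, ?_⟩
  exact (measure_singleton x).trans_lt ENNReal.zero_lt_top

lemma exists_mem_ne_of_not_finiteAtFilter (hα : 0 < α)
    (hX : ¬ (μH[α].restrict X).FiniteAtFilter (𝓝 x)) : ∃ y ∈ X, x ≠ y := by
  obtain ⟨y, hyx, hyX⟩ := inter_nonempty_of_not_finiteAtFilter_restrict
    (measurableSet_singleton x).compl self_mem_nhdsWithin (not_finiteAtFilter_restrict_nhdsNE hα hX)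
  exact ⟨y, hyX, Ne.symm hyx⟩

lemma exists_mem_not_collinear_of_not_finiteAtFilter (hα : 1 ≤ α)
    (hX : ¬ (μH[α].restrict X).FiniteAtFilter (𝓝 x)) (hxy : x ≠ y) :
    ∃ z ∈ X, ¬ Collinear ℝ {x, y, z} := by
  obtain ⟨z, hz, hzX⟩ := inter_nonempty_of_not_finiteAtFilter_restrict
    (measurableSet_line x y).compl self_mem_nhdsWithin
    (not_finiteAtFilter_restrict_nhdsWithin_compl_line hα hX hxy)
  exact ⟨z, hzX, not_collinear_of_notMem_line hxy hz⟩

end Line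

section Angle

open EuclideanGeometry

variable {V P : Type*} [NormedAddCommGroup V] [InnerProductSpace ℝ V] [MetricSpace P]
  [NormedAddTorsor V P]

lemma sin_angle_smul_left (u v : V) {r : ℝ} (hr : r ≠ 0) :
    Real.sin (InnerProductGeometry.angle (r • u) v) =
      Real.sin (InnerProductGeometry.angle u v) := by
  rcases hr.lt_or_gt with hneg | hpos
  · rw [InnerProductGeometry.angle_smul_left_of_neg u v hneg,
      InnerProductGeometry.angle_neg_left, Real.sin_pi_sub]
  · rw [InnerProductGeometry.angle_smul_left_of_pos u v hpos]

lemma sin_angle_mul_dist_le_dist_of_mem_line (x y z : P) {q : P} (hq : q ∈ line[ℝ, x, y]) :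
    Real.sin (∠ x y z) * dist y z ≤ dist z q := by
  obtain ⟨t, rfl⟩ := mem_affineSpan_pair_iff_exists_lineMap_rev_eq.1 hq
  rcases eq_or_ne t 0 with rfl | ht
  · rw [AffineMap.lineMap_apply_zero, dist_comm z y]
    exact mul_le_of_le_one_left dist_nonneg (Real.sin_le_one _)
  · have hangle : Real.sin (∠ (AffineMap.lineMap y x t) y z) = Real.sin (∠ x y z) := by
      rw [angle, AffineMap.lineMap_vsub_left, sin_angle_smul_left _ _ ht, angle]
    rw [← hangle, law_sin]
    exact mul_le_of_le_one_left dist_nonneg (Real.sin_le_one _)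

lemma sin_angle_mul_dist_le_infDist_line (x y z : P) :
    Real.sin (∠ x y z) * dist y z ≤ infDist z line[ℝ, x, y] := by
  refine (le_infDist ⟨x, left_mem_affineSpan_pair ℝ x y⟩).2 fun _ hq => ?_
  exact sin_angle_mul_dist_le_dist_of_mem_line x y z hq

end Angle

section Curvature

open EuclideanGeometry

variable {n : ℕ} {x y z x₀ : EuclideanSpace ℝ (Fin n)}

lemma lineThrough_eq_line (x y : EuclideanSpace ℝ (Fin n)) :
    lineThrough x y = line[ℝ, x, y] := by
  ext q
  simp only [lineThrough, mem_ofPred_eq, SetLike.mem_coe,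
    mem_affineSpan_pair_iff_exists_lineMap_eq, AffineMap.lineMap_apply_module',
    add_comm x, eq_comm]

lemma ofReal_sin_angle_div_dist_le_kappa (hxy : x ≠ y) (hyz : y ≠ z) :
    ENNReal.ofReal (2 * Real.sin (∠ x y z) / dist x z) ≤ kappa x y z := by
  rcases eq_or_ne x z with rfl | hxz
  · simp
  rw [kappa, if_pos ⟨hxy, hyz, hxz⟩, lineThrough_eq_line, ← dist_eq_norm, ← dist_eq_norm]
  have hdist : 0 < dist y z := dist_pos.2 hyz
  refine ENNReal.ofReal_le_ofReal ?_
  calc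
    2 * Real.sin (∠ x y z) / dist x z
      = 2 * (Real.sin (∠ x y z) * dist y z) / (dist x z * dist y z) := by
        rw [← mul_assoc, mul_div_mul_right _ _ hdist.ne']
    _ ≤ 2 * infDist z line[ℝ, x, y] / (dist x z * dist y z) := by
        gcongr
        exact sin_angle_mul_dist_le_infDist_line x y z

lemma exists_pos_eventually_le_kappa (h : ¬ Collinear ℝ {x₀, y, z}) :
    ∃ c : ℝ≥0∞, 0 < c ∧ ∀ᶠ x in 𝓝 x₀, c ≤ kappa x y z := by
  have hxy : x₀ ≠ y := ne₁₂_of_not_collinear h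
  have hxz : x₀ ≠ z := ne₁₃_of_not_collinear h
  have hyz : y ≠ z := ne₂₃_of_not_collinear h
  have hcont : ContinuousAt
      (fun x => ENNReal.ofReal (2 * Real.sin (∠ x y z) / dist x z)) x₀ := by
    have hangle : ContinuousAt (fun x => ∠ x y z) x₀ :=
      ContinuousAt.comp (f := fun x => (x, y, z)) (continuousAt_angle hxy hyz.symm) (by fun_prop)
    have hsin := Real.continuous_sin.continuousAt.comp hangle
    exact ENNReal.continuous_ofReal.continuousAt.comp <|
      (hsin.const_mul 2).div (by fun_prop) (dist_pos.2 hxz).ne'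
  have hpos : 0 < ENNReal.ofReal (2 * Real.sin (∠ x₀ y z) / dist x₀ z) :=
    ENNReal.ofReal_pos.2 <|
      div_pos (mul_pos two_pos (sin_pos_of_not_collinear h)) (dist_pos.2 hxz)
  obtain ⟨c, hc, hclt⟩ := exists_between hpos
  refine ⟨c, hc, ?_⟩
  filter_upwards [hcont.eventually_const_lt hclt, eventually_ne_nhds hxy] with x hx hxy'
  exact hx.le.trans (ofReal_sin_angle_div_dist_le_kappa hxy' hyz)

lemma lintegral_rpow_eq_top_of_kappa_le {μ : Measure (EuclideanSpace ℝ (Fin n))} {p : ℝ}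
    (hp : 0 ≤ p) (hμ : ¬ μ.FiniteAtFilter (𝓝 x₀)) (h : ¬ Collinear ℝ {x₀, y, z})
    {f : EuclideanSpace ℝ (Fin n) → ℝ≥0∞} (hf : ∀ x, kappa x y z ≤ f x) :
    ∫⁻ x, f x ^ p ∂μ = ⊤ := by
  obtain ⟨c, hc, hkappa⟩ := exists_pos_eventually_le_kappa h
  refine lintegral_eq_top_of_eventually_le hμ (ENNReal.rpow_pos_of_nonneg hc hp).ne' ?_
  filter_upwards [hkappa] with x hx
  exact ENNReal.rpow_le_rpow (hx.trans (hf x)) hp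

end Curvature

section Energy

variable {n : ℕ} {X : Set (EuclideanSpace ℝ (Fin n))} {α p : ℝ} {x₀ : EuclideanSpace ℝ (Fin n)}

lemma kappa_le_kappaI {z : EuclideanSpace ℝ (Fin n)} (hz : z ∈ X)
    (x y : EuclideanSpace ℝ (Fin n)) : kappa x y z ≤ kappaI X x y :=
  le_iSup₂ (f := fun z _ => kappa x y z) z hz

lemma kappaI_le_kappaG {y : EuclideanSpace ℝ (Fin n)} (hy : y ∈ X)
    (x : EuclideanSpace ℝ (Fin n)) : kappaI X x y ≤ kappaG X x :=
  le_iSup₂ (f := fun y _ => kappaI X x y) y hy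

lemma energyU_eq_top_of_not_finiteAtFilter (hα : 1 ≤ α) (hp : 0 ≤ p)
    (hX : ¬ (μH[α].restrict X).FiniteAtFilter (𝓝 x₀)) : energyU p α X = ⊤ := by
  obtain ⟨y, hyX, hy⟩ := exists_mem_ne_of_not_finiteAtFilter (by linarith) hX
  obtain ⟨z, hzX, hz⟩ := exists_mem_not_collinear_of_not_finiteAtFilter hα hX hy
  exact lintegral_rpow_eq_top_of_kappa_le hp hX hz fun x =>
    (kappa_le_kappaI hzX x y).trans (kappaI_le_kappaG hyX x)

lemma energyI_eq_top_of_not_finiteAtFilter (hα : 1 ≤ α) (hp : 0 ≤ p)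
    (hX : ¬ (μH[α].restrict X).FiniteAtFilter (𝓝 x₀)) : energyI p α X = ⊤ := by
  have := (measurableSet_singleton x₀).compl.nhdsWithin_isMeasurablyGenerated x₀
  refine lintegral_eq_top_of_eventually_le
    (not_finiteAtFilter_restrict_nhdsNE (by linarith) hX) ENNReal.top_ne_zero ?_
  filter_upwards [self_mem_nhdsWithin] with y hy
  obtain ⟨z, hzX, hz⟩ := exists_mem_not_collinear_of_not_finiteAtFilter hα hX (Ne.symm hy)
  exact (lintegral_rpow_eq_top_of_kappa_le hp hX hz fun x => kappa_le_kappaI hzX x y).ge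

lemma energyM_eq_top_of_not_finiteAtFilter (hα : 1 ≤ α) (hp : 0 ≤ p)
    (hX : ¬ (μH[α].restrict X).FiniteAtFilter (𝓝 x₀)) : energyM p α X = ⊤ := by
  have := (measurableSet_singleton x₀).compl.nhdsWithin_isMeasurablyGenerated x₀
  refine lintegral_eq_top_of_eventually_le
    (not_finiteAtFilter_restrict_nhdsNE (by linarith) hX) ENNReal.top_ne_zero ?_
  filter_upwards [self_mem_nhdsWithin] with z hz
  have := (measurableSet_line x₀ z).compl.nhdsWithin_isMeasurablyGenerated x₀
  refine (lintegral_eq_top_of_eventually_le (not_finiteAtFilter_restrict_nhdsWithin_compl_line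
    hα hX (Ne.symm hz)) ENNReal.top_ne_zero ?_).ge
  filter_upwards [self_mem_nhdsWithin] with y hy
  have hcol : ¬ Collinear ℝ {x₀, y, z} := by
    rw [pair_comm]
    exact not_collinear_of_notMem_line (Ne.symm hz) hy
  exact (lintegral_rpow_eq_top_of_kappa_le hp hX hcol fun _ => le_rfl).ge

end Energy

theorem finite_energy_implies_finite_measure_on_balls (n : ℕ)
    (X : Set (EuclideanSpace ℝ (Fin n))) (α p : ℝ) (hα : 1 ≤ α) (hp : 0 < p)
    (hE : energyU p α X < ⊤ ∨ energyI p α X < ⊤ ∨ energyM p α X < ⊤) :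
    ∀ x : EuclideanSpace ℝ (Fin n), ∀ R > (0 : ℝ),
      μH[α] (X ∩ Metric.closedBall x R) < ⊤ := by
  have hfinite : IsLocallyFiniteMeasure (μH[α].restrict X) := by
    refine ⟨fun x₀ => ?_⟩
    by_contra hX
    rcases hE with hU | hI | hM
    · exact hU.ne (energyU_eq_top_of_not_finiteAtFilter hα hp.le hX)
    · exact hI.ne (energyI_eq_top_of_not_finiteAtFilter hα hp.le hX)
    · exact hM.ne (energyM_eq_top_of_not_finiteAtFilter hα hp.le hX)
  intro x R _
  rw [inter_comm, ← Measure.restrict_apply measurableSet_closedBall]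
  exact (isCompact_closedBall x R).measure_lt_top

end
end

section
/- Let X ⊂ ℝⁿ be an H¹-measurable set and p ∈ [1,∞). If U_p^1(X) < ∞, then X is 1-rectifiable, i.e. there exist countably many Lipschitz maps f_i : ℝ → ℝⁿ such that H¹(X \ ⋃_i f_i(ℝ)) = 0. -/
open MeasureTheory Metric Set Filter
open scoped ENNReal Topology Classical

noncomputable section

/-!
By elementary trigonometry `κ(x,v,w) = 2 sin ∠vxw / |v - w|`, so a bound `κ_G ≤ M` on a subset of
`X` of small diameter makes all angles spanned by its points nearly `0` or `π`. Two such angles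
compare the direction of any two secants, so the projection onto one secant direction is
bi-Lipschitz on the subset and its inverse extends to a Lipschitz curve. Countably many such
subsets exhaust `{x ∈ X | κ_G(x) < ∞}`. Finally, for fixed `v, w` the formula shows that
`κ(·,v,w)` is lower semicontinuous, hence `κ_G` is Borel and finiteness of its `p`-th moment forces
it to be finite almost everywhere on `X`.
-/

open InnerProductGeometry
open scoped NNReal EuclideanGeometry

section Angle

variable {V : Type*} [NormedAddCommGroup V] [InnerProductSpace ℝ V]

lemma norm_sub_smul_sq_eq_sin_angle_sq_add_sq (u z : V) (t : ℝ) :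
    ‖z - t • u‖ ^ 2 =
      (Real.sin (angle u z) * ‖z‖) ^ 2 + (t * ‖u‖ - Real.cos (angle u z) * ‖z‖) ^ 2 := by
  rw [norm_sub_sq_real, real_inner_smul_right, real_inner_comm,
    ← cos_angle_mul_norm_mul_norm, norm_smul, mul_pow, Real.norm_eq_abs, sq_abs]
  linear_combination (-‖z‖ ^ 2) * Real.sin_sq_add_cos_sq (angle u z)

lemma sin_angle_mul_norm_le_norm_sub_smul (u z : V) (t : ℝ) :
    Real.sin (angle u z) * ‖z‖ ≤ ‖z - t • u‖ := by
  refine le_of_sq_le_sq ?_ (norm_nonneg _)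
  rw [norm_sub_smul_sq_eq_sin_angle_sq_add_sq]
  exact le_add_of_nonneg_right (sq_nonneg _)

lemma exists_norm_sub_smul_eq_sin_angle_mul_norm (u z : V) :
    ∃ t : ℝ, ‖z - t • u‖ = Real.sin (angle u z) * ‖z‖ := by
  refine ⟨Real.cos (angle u z) * ‖z‖ / ‖u‖, ?_⟩
  have foot : Real.cos (angle u z) * ‖z‖ / ‖u‖ * ‖u‖ = Real.cos (angle u z) * ‖z‖ := by
    rcases eq_or_ne u 0 with rfl | hu
    · simp
    · exact div_mul_cancel₀ _ (norm_ne_zero_iff.mpr hu)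
  rw [← sq_eq_sq₀ (norm_nonneg _) (mul_nonneg (sin_angle_nonneg u z) (norm_nonneg z)),
    norm_sub_smul_sq_eq_sin_angle_sq_add_sq, foot]
  ring

-- If the two angles add up to more than `π`, apply the triangle inequality through `-y` instead.
lemma cos_angle_add_angle_le_cos_angle (x y z : V) :
    Real.cos (angle x y + angle y z) ≤ Real.cos (angle x z) := by
  rcases le_total (angle x y + angle y z) Real.pi with hsum | hsum
  · exact Real.cos_le_cos_of_nonneg_of_le_pi (angle_nonneg x z) hsum
      (angle_le_angle_add_angle x y z)
  · rw [← Real.cos_two_pi_sub]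
    have htri := angle_le_angle_add_angle x (-y) z
    rw [angle_neg_right, angle_neg_left] at htri
    exact Real.cos_le_cos_of_nonneg_of_le_pi (angle_nonneg x z) (by linarith) (by linarith)

lemma abs_cos_angle_mul_cos_angle_sub_le (x y z : V) :
    |Real.cos (angle x y) * Real.cos (angle y z)| - Real.sin (angle x y) * Real.sin (angle y z) ≤
      |Real.cos (angle x z)| := by
  have hpos := cos_angle_add_angle_le_cos_angle x y z
  have hneg := cos_angle_add_angle_le_cos_angle (-x) y z
  simp only [angle_neg_left, Real.cos_add, Real.cos_pi_sub, Real.sin_pi_sub] at hpos hneg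
  rw [sub_le_iff_le_add, abs_le]
  constructor <;>
    linarith [le_abs_self (Real.cos (angle x z)), neg_le_abs (Real.cos (angle x z))]

lemma one_sub_two_mul_sq_le_abs_cos_angle {x y z : V} {s : ℝ}
    (hxy : Real.sin (angle x y) ≤ s) (hyz : Real.sin (angle y z) ≤ s) :
    1 - 2 * s ^ 2 ≤ |Real.cos (angle x z)| := by
  have one_sub_sq_le {u v : V} (h : Real.sin (angle u v) ≤ s) :
      1 - s ^ 2 ≤ |Real.cos (angle u v)| ^ 2 := by
    rw [sq_abs, Real.cos_sq']
    gcongr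
    exact sin_angle_nonneg u v
  have hcos : 1 - s ^ 2 ≤ |Real.cos (angle x y)| * |Real.cos (angle y z)| := by
    rcases le_total |Real.cos (angle x y)| |Real.cos (angle y z)| with h | h
    · exact (one_sub_sq_le hxy).trans (by rw [sq]; gcongr)
    · exact (one_sub_sq_le hyz).trans (by rw [sq]; gcongr)
  have hsin : Real.sin (angle x y) * Real.sin (angle y z) ≤ s ^ 2 := by
    rw [sq]
    exact mul_le_mul hxy hyz (sin_angle_nonneg y z) ((sin_angle_nonneg x y).trans hxy)
  have h := abs_cos_angle_mul_cos_angle_sub_le x y z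
  rw [abs_mul] at h
  linarith

end Angle

section LipschitzCurve

/-- The set `A` lies in the union of countably many Lipschitz curves `ℝ → E`: the strict form of
`1`-rectifiability, without an exceptional null set. The curves form a countable set, possibly
empty, rather than a sequence. -/
def CoveredByLipschitzCurves {E : Type*} [PseudoEMetricSpace E] (A : Set E) : Prop :=
  ∃ F : Set (ℝ → E), F.Countable ∧ (∀ f ∈ F, ∃ K : ℝ≥0, LipschitzWith K f) ∧
    A ⊆ ⋃ f ∈ F, range f

namespace CoveredByLipschitzCurves

variable {E : Type*} [PseudoEMetricSpace E] {A B : Set E}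

lemma of_subset_range {f : ℝ → E} {K : ℝ≥0} (hf : LipschitzWith K f) (hA : A ⊆ range f) :
    CoveredByLipschitzCurves A :=
  ⟨{f}, countable_singleton f, by simpa using ⟨K, hf⟩, by simpa using hA⟩

lemma of_subsingleton (hA : A.Subsingleton) : CoveredByLipschitzCurves A := by
  rcases hA.eq_empty_or_singleton with rfl | ⟨a, rfl⟩
  · exact ⟨∅, countable_empty, by simp, empty_subset _⟩
  · exact of_subset_range (LipschitzWith.const a) (by simp)

lemma mono (hAB : A ⊆ B) (hB : CoveredByLipschitzCurves B) : CoveredByLipschitzCurves A :=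
  let ⟨F, hF, hLip, hcover⟩ := hB
  ⟨F, hF, hLip, hAB.trans hcover⟩

lemma sUnion {S : Set (Set E)} (hS : S.Countable) (h : ∀ A ∈ S, CoveredByLipschitzCurves A) :
    CoveredByLipschitzCurves (⋃₀ S) := by
  choose! F hF hLip hcover using h
  refine ⟨⋃ A ∈ S, F A, hS.biUnion hF, ?_, ?_⟩
  · simp only [mem_iUnion]
    rintro f ⟨A, hA, hf⟩
    exact hLip A hA f hf
  · refine sUnion_subset fun A hA => (hcover A hA).trans ?_
    exact biUnion_subset_biUnion_left (subset_biUnion_of_mem hA)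

lemma of_forall_nhdsWithin [HereditarilyLindelofSpace E]
    (h : ∀ x ∈ A, ∃ B ∈ 𝓝[A] x, CoveredByLipschitzCurves B) : CoveredByLipschitzCurves A :=
  (HereditarilyLindelofSpace.isLindelof A).induction_on (fun _ _ => mono) (fun _ => sUnion) h

lemma exists_seq [Nonempty E] (hA : CoveredByLipschitzCurves A) :
    ∃ f : ℕ → ℝ → E, (∀ i, ∃ K : ℝ≥0, LipschitzWith K (f i)) ∧ A ⊆ ⋃ i, range (f i) := by
  obtain ⟨F, hF, hLip, hcover⟩ := hA
  rcases F.eq_empty_or_nonempty with rfl | hne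
  · have hempty : A ⊆ ∅ := by simpa using hcover
    exact ⟨fun _ _ => Classical.arbitrary E, fun _ => ⟨0, LipschitzWith.const _⟩,
      hempty.trans (empty_subset _)⟩
  · obtain ⟨f, rfl⟩ := hF.exists_eq_range hne
    exact ⟨f, fun i => hLip _ (mem_range_self i), by simpa using hcover⟩

lemma of_antilipschitzWith_domRestrict {V : Type*} [NormedAddCommGroup V] [NormedSpace ℝ V]
    [FiniteDimensional ℝ V] {A : Set V} {g : V → ℝ} {K : ℝ≥0}
    (hg : AntilipschitzWith K (A.domRestrict g)) : CoveredByLipschitzCurves A := by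
  have hinv : LeftInvOn (Function.invFunOn g A) g A :=
    (injOn_iff_injective.mpr hg.injective).leftInvOn_invFunOn
  have hLip : LipschitzOnWith K (Function.invFunOn g A) (g '' A) :=
    lipschitzOnWith_iff_restrict.mpr
      (hg.to_rightInvOn' (fun _ hy => Function.invFunOn_mem hy) hinv.rightInvOn_image)
  obtain ⟨f, hf, hfeq⟩ := hLip.extend_finite_dimension
  exact of_subset_range hf fun x hx => ⟨g x, by rw [← hfeq (mem_image_of_mem g hx), hinv hx]⟩

end CoveredByLipschitzCurves

end LipschitzCurve

section FlatAngles

variable {E : Type*} [NormedAddCommGroup E] [InnerProductSpace ℝ E] {A : Set E} {s : ℝ}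

/-- Every angle spanned by points of `A` has sine at most `s`; for small `s` the points of `A` are
almost aligned. The sides of the angle must be nondegenerate, because `∠ v x w = π / 2` when `v = x`
or `w = x`. -/
def SinAnglesLE (s : ℝ) (A : Set E) : Prop :=
  ∀ x ∈ A, ∀ v ∈ A, ∀ w ∈ A, v ≠ x → w ≠ x → Real.sin (∠ v x w) ≤ s

namespace SinAnglesLE

lemma le_abs_cos_angle_sub_sub (hA : SinAnglesLE s A) {a b c d : E} (ha : a ∈ A)
    (hb : b ∈ A) (hc : c ∈ A) (hd : d ∈ A) (hba : b ≠ a) (hcd : c ≠ d) :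
    1 - 2 * s ^ 2 ≤ |Real.cos (angle (b - a) (c - d))| := by
  rcases eq_or_ne d a with rfl | hda
  · refine one_sub_two_mul_sq_le_abs_cos_angle (y := b - d) ?_ (hA d hd b hb c hc hba hcd)
    exact hA d hd b hb b hb hba hba
  · refine one_sub_two_mul_sq_le_abs_cos_angle (y := a - d) ?_
      (hA d hd a ha c hc hda.symm hcd)
    rw [← neg_sub d a, angle_neg_right, Real.sin_pi_sub]
    exact hA a ha b hb d hd hba hda

lemma mul_norm_mul_norm_le_abs_inner (hA : SinAnglesLE s A) {a b c d : E} (ha : a ∈ A)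
    (hb : b ∈ A) (hc : c ∈ A) (hd : d ∈ A) (hba : b ≠ a) :
    (1 - 2 * s ^ 2) * (‖b - a‖ * ‖c - d‖) ≤ |inner ℝ (b - a) (c - d)| := by
  rcases eq_or_ne c d with rfl | hcd
  · simp
  · rw [← cos_angle_mul_norm_mul_norm, abs_mul,
      abs_of_nonneg (mul_nonneg (norm_nonneg (b - a)) (norm_nonneg (c - d)))]
    gcongr
    exact hA.le_abs_cos_angle_sub_sub ha hb hc hd hba hcd

lemma antilipschitzWith_domRestrict_inner (hA : SinAnglesLE s A) (hs : 2 * s ^ 2 < 1) {a b : E}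
    (ha : a ∈ A) (hb : b ∈ A) (hba : b ≠ a) :
    AntilipschitzWith ((1 - 2 * s ^ 2) * ‖b - a‖)⁻¹.toNNReal
      (A.domRestrict fun x => inner ℝ (b - a) x) := by
  have hpos : 0 < (1 - 2 * s ^ 2) * ‖b - a‖ :=
    mul_pos (sub_pos.mpr hs) (norm_pos_iff.mpr (sub_ne_zero.mpr hba))
  refine AntilipschitzWith.of_le_mul_dist fun c d => ?_
  rw [Real.coe_toNNReal _ (inv_nonneg.mpr hpos.le), inv_mul_eq_div, le_div_iff₀' hpos, mul_assoc,
    Subtype.dist_eq, dist_eq_norm, Real.dist_eq, domRestrict_apply, domRestrict_apply,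
    ← inner_sub_right]
  exact hA.mul_norm_mul_norm_le_abs_inner ha hb c.2 d.2 hba

lemma coveredByLipschitzCurves [FiniteDimensional ℝ E] (hA : SinAnglesLE s A)
    (hs : 2 * s ^ 2 < 1) : CoveredByLipschitzCurves A := by
  rcases A.subsingleton_or_nontrivial with hsub | ⟨a, ha, b, hb, hab⟩
  · exact .of_subsingleton hsub
  · exact .of_antilipschitzWith_domRestrict
      (hA.antilipschitzWith_domRestrict_inner hs ha hb hab.symm)

end SinAnglesLE

end FlatAngles

section Menger

variable {n : ℕ} {X A : Set (EuclideanSpace ℝ (Fin n))} {x v w : EuclideanSpace ℝ (Fin n)}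

lemma infDist_lineThrough (x v w : EuclideanSpace ℝ (Fin n)) :
    infDist w (lineThrough x v) = Real.sin (∠ v x w) * ‖w - x‖ := by
  have dist_point (t : ℝ) : dist w (x + t • (v - x)) = ‖(w - x) - t • (v - x)‖ := by
    rw [dist_eq_norm, sub_add_eq_sub_sub]
  apply le_antisymm
  · obtain ⟨t, ht⟩ := exists_norm_sub_smul_eq_sin_angle_mul_norm (v - x) (w - x)
    have hmem : x + t • (v - x) ∈ lineThrough x v := ⟨t, rfl⟩
    exact (infDist_le_dist_of_mem hmem).trans_eq ((dist_point t).trans ht)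
  · have hne : (lineThrough x v).Nonempty := ⟨x, 0, by simp⟩
    refine (le_infDist hne).mpr ?_
    rintro _ ⟨t, rfl⟩
    exact (sin_angle_mul_norm_le_norm_sub_smul _ _ t).trans_eq (dist_point t).symm

lemma kappa_eq_sin_angle (hvx : v ≠ x) (hwx : w ≠ x) (hvw : v ≠ w) :
    kappa x v w = ENNReal.ofReal (2 * Real.sin (∠ v x w) / dist v w) := by
  have hnorm : ‖w - x‖ ≠ 0 := norm_ne_zero_iff.mpr (sub_ne_zero.mpr hwx)
  rw [kappa, if_pos ⟨hvx.symm, hvw, hwx.symm⟩, infDist_lineThrough, norm_sub_rev x w,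
    dist_eq_norm, ← mul_assoc, mul_comm ‖w - x‖, mul_div_mul_right _ _ hnorm]

lemma lowerSemicontinuous_kappa (v w : EuclideanSpace ℝ (Fin n)) :
    LowerSemicontinuous fun x => kappa x v w := by
  intro x
  by_cases h : x ≠ v ∧ v ≠ w ∧ x ≠ w
  · obtain ⟨hxv, hvw, hxw⟩ := h
    have hformula : (fun y => kappa y v w) =ᶠ[𝓝 x]
        fun y => ENNReal.ofReal (2 * Real.sin (∠ v y w) / dist v w) := by
      filter_upwards [isOpen_ne.mem_nhds hxv, isOpen_ne.mem_nhds hxw] with y hyv hyw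
      exact kappa_eq_sin_angle hyv.symm hyw.symm hvw
    have hangle : ContinuousAt (fun y => ∠ v y w) x :=
      ContinuousAt.comp (f := fun y => (v, y, w))
        (EuclideanGeometry.continuousAt_angle hxv.symm hxw.symm) (by fun_prop)
    refine (ContinuousAt.congr ?_ hformula.symm).lowerSemicontinuousAt
    exact ENNReal.continuous_ofReal.continuousAt.comp
      ((continuousAt_const.mul (Real.continuous_sin.continuousAt.comp hangle)).div_const _)
  · intro c hc
    simp [kappa, h] at hc

lemma measurable_kappaG (X : Set (EuclideanSpace ℝ (Fin n))) : Measurable (kappaG X) :=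
  LowerSemicontinuous.measurable <| lowerSemicontinuous_biSup fun v _ =>
    lowerSemicontinuous_biSup fun w _ => lowerSemicontinuous_kappa v w

lemma kappa_le_kappaG (hv : v ∈ X) (hw : w ∈ X) : kappa x v w ≤ kappaG X x :=
  (le_iSup₂ (f := fun w _ => kappa x v w) w hw).trans
    (le_iSup₂ (f := fun v _ => ⨆ w ∈ X, kappa x v w) v hv)

lemma two_mul_sin_angle_le_of_kappaG_le {M : ℝ≥0} (hx : kappaG X x ≤ M) (hv : v ∈ X) (hw : w ∈ X)
    (hvx : v ≠ x) (hwx : w ≠ x) : 2 * Real.sin (∠ v x w) ≤ M * dist v w := by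
  rcases eq_or_ne v w with rfl | hvw
  · simp [EuclideanGeometry.angle_self_of_ne hvx]
  · have hκ : kappa x v w ≤ M := (kappa_le_kappaG hv hw).trans hx
    rwa [kappa_eq_sin_angle hvx hwx hvw, ENNReal.ofReal_le_coe,
      div_le_iff₀ (dist_pos.mpr hvw)] at hκ

lemma sinAnglesLE_of_kappaG_le {M : ℝ≥0} (hAX : A ⊆ X) (hκ : ∀ x ∈ A, kappaG X x ≤ M) {δ : ℝ}
    (hdist : ∀ v ∈ A, ∀ w ∈ A, dist v w ≤ δ) : SinAnglesLE (M * δ / 2) A := by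
  intro x hx v hv w hw hvx hwx
  have hsin := two_mul_sin_angle_le_of_kappaG_le (hκ x hx) (hAX hv) (hAX hw) hvx hwx
  have hδ : M * dist v w ≤ M * δ := by gcongr; exact hdist v hv w hw
  linarith

lemma coveredByLipschitzCurves_kappaG_le (X : Set (EuclideanSpace ℝ (Fin n))) (M : ℝ≥0) :
    CoveredByLipschitzCurves {x ∈ X | kappaG X x ≤ M} := by
  refine .of_forall_nhdsWithin fun x _ => ?_
  set r : ℝ := (2 * ((M : ℝ) + 1))⁻¹ with hr
  have hsmall : M * (2 * r) ≤ 1 := by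
    rw [hr, mul_inv, mul_inv_cancel_left₀ two_ne_zero, ← div_eq_mul_inv,
      div_le_one (by positivity)]
    linarith
  have hflat : SinAnglesLE (M * (2 * r) / 2) ({x ∈ X | kappaG X x ≤ M} ∩ ball x r) := by
    refine sinAnglesLE_of_kappaG_le (fun y hy => hy.1.1) (fun y hy => hy.1.2) fun v hv w hw => ?_
    linarith [dist_triangle_right v w x, mem_ball.mp hv.2, mem_ball.mp hw.2]
  refine ⟨_, inter_mem_nhdsWithin _ (ball_mem_nhds x (by positivity)),
    hflat.coveredByLipschitzCurves ?_⟩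
  have hnonneg : 0 ≤ M * (2 * r) := by positivity
  nlinarith

lemma coveredByLipschitzCurves_kappaG_lt_top (X : Set (EuclideanSpace ℝ (Fin n))) :
    CoveredByLipschitzCurves {x ∈ X | kappaG X x < ⊤} := by
  have hcover : {x ∈ X | kappaG X x < ⊤} ⊆ ⋃₀ range fun M : ℕ => {x ∈ X | kappaG X x ≤ M} := by
    rintro x ⟨hxX, hx⟩
    obtain ⟨M, hM⟩ := ENNReal.exists_nat_gt hx.ne
    exact ⟨_, ⟨M, rfl⟩, hxX, hM.le⟩
  refine .mono hcover (.sUnion (countable_range _) ?_)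
  rintro _ ⟨M, rfl⟩
  exact_mod_cast coveredByLipschitzCurves_kappaG_le X M

lemma measure_kappaG_eq_top_eq_zero {μ : Measure (EuclideanSpace ℝ (Fin n))} {p : ℝ} (hp : 0 < p)
    (hE : ∫⁻ x in X, kappaG X x ^ p ∂μ < ⊤) : μ {x ∈ X | kappaG X x = ⊤} = 0 := by
  have hmeas := measurable_kappaG X
  have hae : ∀ᵐ x ∂μ.restrict X, kappaG X x < ⊤ := by
    filter_upwards [ae_lt_top (hmeas.pow_const p) hE.ne] with x hx
    exact (ENNReal.rpow_lt_top_iff_of_pos hp).mp hx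
  rw [ae_restrict_iff (measurableSet_lt hmeas measurable_const)] at hae
  simpa [ae_iff] using hae

end Menger

theorem finite_energyU_implies_rectifiable_general {n : ℕ} {X : Set (EuclideanSpace ℝ (Fin n))}
    {μ : Measure (EuclideanSpace ℝ (Fin n))} {p : ℝ} (hp : 0 < p)
    (hE : ∫⁻ x in X, kappaG X x ^ p ∂μ < ⊤) :
    ∃ f : ℕ → ℝ → EuclideanSpace ℝ (Fin n),
      (∀ i, ∃ K : ℝ≥0, LipschitzWith K (f i)) ∧ μ (X \ ⋃ i, range (f i)) = 0 := by
  obtain ⟨f, hLip, hcover⟩ := (coveredByLipschitzCurves_kappaG_lt_top X).exists_seq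
  refine ⟨f, hLip, measure_mono_null ?_ (measure_kappaG_eq_top_eq_zero hp hE)⟩
  rintro x ⟨hxX, hx⟩
  exact ⟨hxX, not_lt_top_iff.mp fun hlt => hx (hcover ⟨hxX, hlt⟩)⟩

theorem finite_energyU_implies_rectifiable (n : ℕ) (X : Set (EuclideanSpace ℝ (Fin n)))
    (hX : MeasureTheory.NullMeasurableSet X μH[1]) (p : ℝ) (hp : 1 ≤ p)
    (hE : energyU p 1 X < ⊤) :
    ∃ f : ℕ → ℝ → EuclideanSpace ℝ (Fin n),
      (∀ i, ∃ K : NNReal, LipschitzWith K (f i)) ∧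
      μH[1] (X \ ⋃ i, Set.range (f i)) = 0 :=
  finite_energyU_implies_rectifiable_general (zero_lt_one.trans_le hp) hE

end
end

section
/- Let x, y ∈ ℝⁿ \ {0} with x ≠ y, and suppose the angle ε = ∠(x, 0, y) between x and y lies in (0, π). Then dist(L_{x,y}, 0) ≥ (sin ε / 2)·min(‖x‖, ‖y‖), where L_{x,y} denotes the affine line through x and y. -/
open MeasureTheory Metric Set Filter
open scoped ENNReal Topology Classical

noncomputable section

/-!
The area `sin ∠(x, y) * ‖x‖ * ‖y‖` of the parallelogram spanned by `x` and `y` does not change when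
`y` is replaced by `y - x` and then `x` by any point `p` of the line through `x` and `y`: both steps
are shears. Hence it is at most `‖p‖ * ‖y - x‖ ≤ ‖p‖ * (2 * max ‖x‖ ‖y‖)`, and dividing by
`2 * max ‖x‖ ‖y‖` gives the lower bound for `‖p‖`.
-/

theorem norm_sub_le_two_mul_max_norm {E : Type*} [SeminormedAddCommGroup E] (x y : E) :
    ‖x - y‖ ≤ 2 * max ‖x‖ ‖y‖ := by
  linarith [norm_sub_le x y, le_max_left ‖x‖ ‖y‖, le_max_right ‖x‖ ‖y‖]

section InnerProductSpace

open InnerProductGeometry AffineMap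

variable {V : Type*} [NormedAddCommGroup V] [InnerProductSpace ℝ V]

theorem sin_angle_add_smul_mul_norm_mul_norm (x v : V) (t : ℝ) :
    Real.sin (angle (x + t • v) v) * (‖x + t • v‖ * ‖v‖) =
      Real.sin (angle x v) * (‖x‖ * ‖v‖) := by
  rw [sin_angle_mul_norm_mul_norm, sin_angle_mul_norm_mul_norm]
  simp only [inner_add_left, inner_add_right, real_inner_smul_left, real_inner_smul_right,
    real_inner_comm x v]
  ring_nf

theorem sin_angle_sub_mul_norm_mul_norm (x y : V) :
    Real.sin (angle x (y - x)) * (‖x‖ * ‖y - x‖) = Real.sin (angle x y) * (‖x‖ * ‖y‖) := by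
  rw [angle_comm x y]
  linear_combination -‖x‖ * sin_angle_mul_norm_eq_sin_angle_mul_norm y x

theorem sin_angle_mul_norm_mul_norm_le_norm_lineMap_mul_norm_sub (x y : V) (t : ℝ) :
    Real.sin (angle x y) * (‖x‖ * ‖y‖) ≤ ‖lineMap x y t‖ * ‖y - x‖ := by
  rw [lineMap_apply_module', add_comm, ← sin_angle_sub_mul_norm_mul_norm,
    ← sin_angle_add_smul_mul_norm_mul_norm x (y - x) t]
  exact mul_le_of_le_one_left (by positivity) (Real.sin_le_one _)

theorem sin_angle_div_two_mul_min_norm_le_norm_lineMap (x y : V) (t : ℝ) :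
    Real.sin (angle x y) / 2 * min ‖x‖ ‖y‖ ≤ ‖lineMap x y t‖ := by
  rcases eq_or_ne x 0 with rfl | hx
  · simp
  have max_pos : 0 < 2 * max ‖x‖ ‖y‖ := by positivity
  refine le_of_mul_le_mul_right ?_ max_pos
  calc Real.sin (angle x y) / 2 * min ‖x‖ ‖y‖ * (2 * max ‖x‖ ‖y‖)
      = Real.sin (angle x y) * (‖x‖ * ‖y‖) := by rw [← min_mul_max ‖x‖ ‖y‖]; ring
    _ ≤ ‖lineMap x y t‖ * ‖y - x‖ :=
        sin_angle_mul_norm_mul_norm_le_norm_lineMap_mul_norm_sub x y t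
    _ ≤ ‖lineMap x y t‖ * (2 * max ‖x‖ ‖y‖) := by
        rw [norm_sub_rev]
        gcongr
        exact norm_sub_le_two_mul_max_norm x y

theorem dist_line_ge_of_angle_general (x y : V) :
    Real.sin (angle x y) / 2 * min ‖x‖ ‖y‖ ≤ infDist 0 (line[ℝ, x, y] : Set V) := by
  rw [le_infDist ⟨x, left_mem_affineSpan_pair ℝ x y⟩]
  intro p hp
  obtain ⟨t, rfl⟩ := mem_affineSpan_pair_iff_exists_lineMap_eq.mp hp
  simpa only [dist_zero_left] using sin_angle_div_two_mul_min_norm_le_norm_lineMap x y t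

end InnerProductSpace

theorem lineThrough_eq_affineSpan_pair {n : ℕ} (x y : EuclideanSpace ℝ (Fin n)) :
    lineThrough x y = (line[ℝ, x, y] : Set (EuclideanSpace ℝ (Fin n))) := by
  ext p
  simp only [lineThrough, mem_ofPred_eq, SetLike.mem_coe, mem_affineSpan_pair_iff_exists_lineMap_eq,
    AffineMap.lineMap_apply_module', add_comm x, eq_comm (a := p)]

theorem dist_line_ge_of_angle (n : ℕ) (x y : EuclideanSpace ℝ (Fin n))
    (hx : x ≠ 0) (hy : y ≠ 0) (hxy : x ≠ y)
    (hang : InnerProductGeometry.angle x y ∈ Set.Ioo 0 Real.pi) :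
    Real.sin (InnerProductGeometry.angle x y) / 2 * min ‖x‖ ‖y‖ ≤
      Metric.infDist 0 (lineThrough x y) := by
  rw [lineThrough_eq_affineSpan_pair]
  exact dist_line_ge_of_angle_general x y

end
end
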